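/- There exists a constant C depending only on d such that for every positive integer n and every convex body Ω ⊂ ℝ^d, there exist points x_1, …, x_N ∈ Ω with N ≤ C·n^d such that for every real polynomial Q in d variables of total degree at most n, max_{z∈Ω} |Q(z)| ≤ 2·max_{1≤j≤N} |Q(x_j)|. -/

import Mathlib

/-!
A convex body `Ω ⊂ ℝ^d` has a centre `c` at which every affine functional `f` that is nonnegative on
`Ω` is at least `1 / (d + 1)` times its maximum. The cell of radius `ρ` about `x` consists of the
points `y` with `|f y - f x| ≤ ρ * √(f x * f c)` for all such `f`.

If `x` is deep enough compared with `ρ`, then `x` and any point of its cell lie on an ellipse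
inscribed in `Ω`, at an angular distance `O(ρ)`. A boundary point and its image under the
contraction towards `c` that produces a point of depth `σ ^ 2` lie on a degenerate such ellipse, at
an angular distance `O(σ)`. Along an ellipse a polynomial of degree `n` is trigonometric, and the
Bernstein inequality makes its variation small when `σ` and `ρ` are small multiples of `1 / n`.
Hence the centres of a maximal family of disjoint cells about deep points form a mesh.

To count the cells, an Auerbach basis of rescaled functionals `f` provides coordinates in which the
cell is comparable to a cube. A product of univariate peaking polynomials, namely divided Chebyshev
differences, in these functionals has degree `O(n)`, is about `1` on the cell, and has squared
`L²(Ω)` norm comparable to the volume of the cell. Projecting the normalized indicators of the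
disjoint cells to the space of such polynomials shows that their number is at most a constant
times its dimension, which is `O(n ^ d)`.
-/

/-! ### Polynomials on the unit disc -/

section Disc

open Polynomial

variable {p : ℂ[X]} {N : ℕ} {M : ℝ}

lemma norm_eval_le_of_forall_norm_eq_one (h : ∀ z : ℂ, ‖z‖ = 1 → ‖p.eval z‖ ≤ M) {z : ℂ}
    (hz : ‖z‖ ≤ 1) : ‖p.eval z‖ ≤ M := by
  refine Complex.norm_le_of_forall_mem_frontier_norm_le (U := Metric.ball (0 : ℂ) 1)
    (f := fun z => p.eval z) Metric.isBounded_ball p.differentiable.diffContOnCl ?_ ?_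
  · intro w hw
    rw [frontier_ball _ one_ne_zero, mem_sphere_zero_iff_norm] at hw
    exact h w hw
  · rwa [closure_ball _ one_ne_zero, mem_closedBall_zero_iff]

lemma eval_reflect_inv_mul_pow {K : Type*} [Field K] {p : K[X]} (hp : p.natDegree ≤ N) {x : K}
    (hx : x ≠ 0) : (reflect N p).eval x⁻¹ * x ^ N = p.eval x := by
  let _ := invertibleOfNonzero hx
  simpa [eval₂_id] using eval₂_reflect_mul_pow (RingHom.id K) x N p hp

lemma norm_eval_le_mul_pow (hp : p.natDegree ≤ N) (h : ∀ z : ℂ, ‖z‖ = 1 → ‖p.eval z‖ ≤ M)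
    {z : ℂ} {R : ℝ} (hR : 1 ≤ R) (hz : ‖z‖ ≤ R) : ‖p.eval z‖ ≤ M * R ^ N := by
  have hM : 0 ≤ M := (norm_nonneg _).trans (h 1 norm_one)
  rcases le_total ‖z‖ 1 with hz1 | hz1
  · exact (norm_eval_le_of_forall_norm_eq_one h hz1).trans
      (le_mul_of_one_le_right hM (one_le_pow₀ hR))
  have hz0 : z ≠ 0 := norm_pos_iff.mp (one_pos.trans_le hz1)
  have hcircle : ∀ w : ℂ, ‖w‖ = 1 → ‖(reflect N p).eval w‖ ≤ M := by
    intro w hw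
    have hw0 : w ≠ 0 := norm_pos_iff.mp (hw ▸ one_pos)
    have hw' := h w⁻¹ (by rw [norm_inv, hw, inv_one])
    rwa [← eval_reflect_inv_mul_pow hp (inv_ne_zero hw0), inv_inv, norm_mul, norm_pow, norm_inv,
      hw, inv_one, one_pow, mul_one] at hw'
  have hinv : ‖z⁻¹‖ ≤ 1 := by rw [norm_inv]; exact inv_le_one_of_one_le₀ hz1
  rw [← eval_reflect_inv_mul_pow hp hz0, norm_mul, norm_pow]
  gcongr
  exact norm_eval_le_of_forall_norm_eq_one hcircle hinv

lemma norm_eval_derivative_le (hN : p.natDegree ≤ N) (h : ∀ z : ℂ, ‖z‖ = 1 → ‖p.eval z‖ ≤ M)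
    {z : ℂ} (hz : ‖z‖ ≤ 1) : ‖p.derivative.eval z‖ ≤ Real.exp 1 * N * M := by
  rcases N.eq_zero_or_pos with rfl | hN0
  · rw [derivative_of_natDegree_zero (Nat.le_zero.mp hN)]
    simp
  have hM : 0 ≤ M := (norm_nonneg _).trans (h 1 norm_one)
  have hr : (0 : ℝ) < (N : ℝ)⁻¹ := by positivity
  have hsphere : ∀ w ∈ Metric.sphere z (N : ℝ)⁻¹, ‖p.eval w‖ ≤ M * Real.exp 1 := by
    intro w hw
    have hw1 : ‖w‖ ≤ 1 + (N : ℝ)⁻¹ := by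
      have := norm_le_norm_add_norm_sub' w z
      rw [mem_sphere_iff_norm.mp hw] at this
      linarith
    exact (norm_eval_le_mul_pow hN h (by linarith) hw1).trans
      (by gcongr; exact Real.one_add_inv_pow_le_exp)
  have hcauchy := Complex.norm_deriv_le_of_forall_mem_sphere_norm_le hr
    p.differentiable.diffContOnCl hsphere
  rw [p.deriv] at hcauchy
  exact hcauchy.trans_eq (by rw [div_inv_eq_mul]; ring)

lemma norm_eval_sub_eval_le (hN : p.natDegree ≤ N) (h : ∀ z : ℂ, ‖z‖ = 1 → ‖p.eval z‖ ≤ M)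
    {z w : ℂ} (hz : ‖z‖ ≤ 1) (hw : ‖w‖ ≤ 1) :
    ‖p.eval w - p.eval z‖ ≤ Real.exp 1 * N * M * ‖w - z‖ := by
  refine (convex_closedBall (0 : ℂ) 1).norm_image_sub_le_of_norm_deriv_le
    (f := fun z => p.eval z) (fun x _ => p.differentiableAt) (fun x hx => ?_) (by simpa) (by simpa)
  rw [p.deriv]
  exact norm_eval_derivative_le hN h (by simpa using hx)

end Disc

/-! ### Polynomials along an ellipse -/

/-- The point at angle `θ` of the ellipse with centre `c` and conjugate radii `u` and `v`. -/
noncomputable def ellipse {E : Type*} [AddCommGroup E] [Module ℝ E] (c u v : E) (θ : ℝ) : E :=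
  c + Real.cos θ • u + Real.sin θ • v

section Ellipse

variable {ι : Type*}

section Circle

open Polynomial

/-- The complex quadratic polynomial that agrees with `z * (c + cos θ * u + sin θ * v)` at
`z = exp (θ * I)`. -/
noncomputable def circleQuadratic (c u v : ℝ) : ℂ[X] :=
  C ((u - v * Complex.I) / 2) * X ^ 2 + C (c : ℂ) * X + C ((u + v * Complex.I) / 2)

lemma eval_circleQuadratic_exp (c u v θ : ℝ) :
    (circleQuadratic c u v).eval (Complex.exp (θ * Complex.I)) =
      Complex.exp (θ * Complex.I) * ((ellipse c u v θ : ℝ) : ℂ) := by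
  have hcos : (Real.cos θ : ℂ) =
      (Complex.exp (θ * Complex.I) + (Complex.exp (θ * Complex.I))⁻¹) / 2 := by
    rw [Complex.ofReal_cos, Complex.cos, ← Complex.exp_neg, neg_mul]
  have hsin : (Real.sin θ : ℂ) =
      ((Complex.exp (θ * Complex.I))⁻¹ - Complex.exp (θ * Complex.I)) * Complex.I / 2 := by
    rw [Complex.ofReal_sin, Complex.sin, ← Complex.exp_neg, neg_mul]
  have := Complex.exp_ne_zero (θ * Complex.I)
  simp only [circleQuadratic, ellipse, eval_add, eval_mul, eval_C, eval_pow, eval_X, smul_eq_mul,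
    Complex.ofReal_add, Complex.ofReal_mul, hcos, hsin]
  field_simp
  ring

lemma exists_eval_exp_eq_eval_ellipse {Q : MvPolynomial ι ℝ} {n : ℕ} (hQ : Q.totalDegree ≤ n)
    (c u v : ι → ℝ) :
    ∃ p : ℂ[X], p.natDegree ≤ 2 * n ∧ ∀ θ : ℝ,
      p.eval (Complex.exp (θ * Complex.I)) =
        Complex.exp (θ * Complex.I) ^ n * (MvPolynomial.eval (ellipse c u v θ) Q : ℝ) := by
  let q : ι → ℂ[X] := fun i => circleQuadratic (c i) (u i) (v i)
  have hs : ∀ s ∈ Q.support, ∑ i ∈ s.support, s i ≤ n := fun s hs =>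
    (MvPolynomial.le_totalDegree hs).trans hQ
  refine ⟨∑ s ∈ Q.support, C ((Q.coeff s : ℝ) : ℂ) *
    (X ^ (n - ∑ i ∈ s.support, s i) * ∏ i ∈ s.support, q i ^ s i),
    natDegree_sum_le_of_forall_le _ _ fun s hsQ => ?_, fun θ => ?_⟩
  · have hprod : (∏ i ∈ s.support, q i ^ s i).natDegree ≤ (∑ i ∈ s.support, s i) * 2 := by
      rw [Finset.sum_mul]
      exact (natDegree_prod_le _ _).trans (Finset.sum_le_sum fun i _ =>
        natDegree_pow_le.trans (Nat.mul_le_mul_left _ natDegree_quadratic_le))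
    refine (natDegree_C_mul_le _ _).trans (natDegree_mul_le.trans ?_)
    rw [natDegree_X_pow]
    have := hs s hsQ
    omega
  · set e := Complex.exp (θ * Complex.I)
    have hq : ∀ i, (q i).eval e = e * ((ellipse c u v θ i : ℝ) : ℂ) := fun i =>
      eval_circleQuadratic_exp (c i) (u i) (v i) θ
    rw [eval_finsetSum, MvPolynomial.eval_eq, Complex.ofReal_sum, Finset.mul_sum]
    refine Finset.sum_congr rfl fun s hsQ => ?_
    simp only [eval_mul, eval_C, eval_pow, eval_X, eval_prod, hq, Complex.ofReal_mul,
      Complex.ofReal_prod, Complex.ofReal_pow, mul_pow, Finset.prod_mul_distrib,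
      Finset.prod_pow_eq_pow_sum]
    rw [← Nat.sub_add_cancel (hs s hsQ), pow_add, Nat.add_sub_cancel]
    ring

end Circle

/-- A weak form of the Bernstein inequality for trigonometric polynomials: the constant `7` bounds
`2 * e + 1`, where the sharp one is `1`. -/
lemma abs_eval_ellipse_sub_le {Q : MvPolynomial ι ℝ} {n : ℕ} (hQ : Q.totalDegree ≤ n)
    {c u v : ι → ℝ} {M : ℝ} (hM : ∀ θ, |MvPolynomial.eval (ellipse c u v θ) Q| ≤ M) (θ : ℝ) :
    |MvPolynomial.eval (ellipse c u v θ) Q - MvPolynomial.eval (ellipse c u v 0) Q|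
      ≤ 7 * n * |θ| * M := by
  obtain ⟨p, hp, hpe⟩ := exists_eval_exp_eq_eval_ellipse hQ c u v
  have hM0 : 0 ≤ M := (abs_nonneg _).trans (hM 0)
  have hcircle : ∀ z : ℂ, ‖z‖ = 1 → ‖p.eval z‖ ≤ M := by
    intro z hz
    obtain ⟨α, rfl⟩ := (Complex.norm_eq_one_iff z).mp hz
    rw [hpe, norm_mul, norm_pow, Complex.norm_exp_ofReal_mul_I, one_pow, one_mul,
      Complex.norm_real]
    exact hM α
  have hexp : ∀ α : ℝ, ‖Complex.exp (α * Complex.I) - 1‖ ≤ |α| := fun α => by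
    simpa only [mul_comm Complex.I, Real.norm_eq_abs] using
      Real.norm_exp_I_mul_ofReal_sub_one_le (x := α)
  set e := Complex.exp (θ * Complex.I)
  set T := MvPolynomial.eval (ellipse c u v θ) Q
  set T₀ := MvPolynomial.eval (ellipse c u v 0) Q
  have hp₀ : p.eval 1 = T₀ := by simpa using hpe 0
  have hpow : ‖e ^ n - 1‖ ≤ n * |θ| := by
    have := hexp (n * θ)
    rwa [Complex.ofReal_mul, Complex.ofReal_natCast, mul_assoc, Complex.exp_nat_mul, abs_mul,
      Nat.abs_cast] at this
  have hdiff : ‖p.eval e - p.eval 1‖ ≤ Real.exp 1 * (2 * n) * M * |θ| := by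
    refine (norm_eval_sub_eval_le hp hcircle norm_one.le
      (Complex.norm_exp_ofReal_mul_I θ).le).trans ?_
    push_cast
    gcongr
    exact hexp θ
  have hsplit : ((T - T₀ : ℝ) : ℂ) = (p.eval e - p.eval 1) - (e ^ n - 1) * T := by
    rw [hpe θ, hp₀]; push_cast; ring
  calc |T - T₀| = ‖(p.eval e - p.eval 1) - (e ^ n - 1) * T‖ := by
        rw [← hsplit, Complex.norm_real, Real.norm_eq_abs]
    _ ≤ ‖p.eval e - p.eval 1‖ + ‖e ^ n - 1‖ * |T| := by
        rw [← Real.norm_eq_abs T, ← Complex.norm_real, ← norm_mul]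
        exact norm_sub_le _ _
    _ ≤ Real.exp 1 * (2 * n) * M * |θ| + n * |θ| * M := by
        gcongr
        exact hM θ
    _ = (2 * Real.exp 1 + 1) * (n * |θ| * M) := by ring
    _ ≤ 7 * (n * |θ| * M) := by
        gcongr
        linarith [Real.exp_one_lt_three]
    _ = 7 * n * |θ| * M := by ring

end Ellipse

/-! ### Nonnegative affine functionals and centres -/

section Convex

variable {E : Type*} [NormedAddCommGroup E] [NormedSpace ℝ E] {Ω : Set E}

/-- The cone of continuous affine functionals that are nonnegative on `Ω`. All the geometry of a
closed convex set is expressed through it. -/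
def nonnegAffine (Ω : Set E) : Set (E →ᴬ[ℝ] ℝ) :=
  {f | ∀ y ∈ Ω, 0 ≤ f y}

/-- The point `c` is a centre of `Ω` with constant `κ` when no nonnegative affine functional
exceeds `κ` times its value at `c`. -/
structure IsCenter (Ω : Set E) (c : E) (κ : ℝ) : Prop where
  mem : c ∈ Ω
  apply_le : ∀ f ∈ nonnegAffine Ω, ∀ y ∈ Ω, f y ≤ κ * f c

lemma contLinear_sub_eq (f : E →ᴬ[ℝ] ℝ) (x y : E) : f.contLinear (y - x) = f y - f x :=
  f.contLinear_map_vsub y x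

lemma apply_add_eq (f : E →ᴬ[ℝ] ℝ) (x v : E) : f (x + v) = f x + f.contLinear v := by
  rw [← sub_eq_iff_eq_add', ← contLinear_sub_eq, add_sub_cancel_left]

lemma toContinuousAffineMap_add_const_mem_nonnegAffine {φ : StrongDual ℝ E} {a : ℝ}
    (h : ∀ y ∈ Ω, 0 ≤ φ y + a) :
    φ.toContinuousAffineMap + ContinuousAffineMap.const ℝ E a ∈ nonnegAffine Ω := h

lemma mem_of_forall_nonnegAffine (hconv : Convex ℝ Ω) (hclosed : IsClosed Ω) {y : E}
    (h : ∀ f ∈ nonnegAffine Ω, 0 ≤ f y) : y ∈ Ω := by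
  by_contra hy
  obtain ⟨φ, a, hφ, ha⟩ := geometric_hahn_banach_closed_point hconv hclosed hy
  have hmem := toContinuousAffineMap_add_const_mem_nonnegAffine (φ := -φ) (a := a)
    fun w hw => by simpa using (hφ w hw).le
  have hnonneg : 0 ≤ -φ y + a := h _ hmem
  linarith

lemma apply_le_card_mul_apply_centroid {f : E →ᴬ[ℝ] ℝ} (hf : f ∈ nonnegAffine Ω)
    {I : Finset Ω} {y : Ω} (hy : y ∈ I) :
    f y ≤ I.card * f (I.centroid ℝ fun i : Ω => (i : E)) := by
  have hI : (I.card : ℝ) ≠ 0 := Nat.cast_ne_zero.mpr (Finset.card_ne_zero_of_mem hy)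
  have hmap : f (I.centroid ℝ fun i : Ω => (i : E)) = (I.card : ℝ)⁻¹ * ∑ i ∈ I, f i := by
    have hsum := I.sum_centroidWeights_eq_one_of_cast_card_ne_zero hI
    change (f : E →ᵃ[ℝ] ℝ) _ = _
    rw [Finset.centroid, I.map_affineCombination _ _ hsum,
      I.affineCombination_eq_linear_combination _ _ hsum]
    simp [Finset.mul_sum]
  rw [hmap, mul_inv_cancel_left₀ hI]
  exact Finset.single_le_sum (f := fun i : Ω => f i) (fun i _ => hf i i.2) hy

lemma exists_isCenter [FiniteDimensional ℝ E] (hcomp : IsCompact Ω) (hconv : Convex ℝ Ω)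
    (hne : Ω.Nonempty) : ∃ c, IsCenter Ω c (Module.finrank ℝ E + 1) := by
  set κ : ℝ := Module.finrank ℝ E + 1
  let F : Ω → Set E := fun y => Ω ∩ ⋂ f ∈ nonnegAffine Ω, {p | f y ≤ κ * f p}
  have hF : (⋂ y, F y).Nonempty := by
    refine Convex.helly_theorem_compact' (𝕜 := ℝ) (fun y => ?_) (fun y => ?_) (fun I hI => ?_)
    · refine hconv.inter (convex_iInter₂ fun f _ => ?_)
      exact (convex_Ici (𝕜 := ℝ) (f y)).affine_preimage (κ • (f : E →ᵃ[ℝ] ℝ))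
    · exact hcomp.inter_right (isClosed_biInter fun f _ =>
        isClosed_le continuous_const (continuous_const.mul f.continuous))
    · rcases I.eq_empty_or_nonempty with rfl | hIne
      · simp
      have hcard : (I.card : ℝ) ≤ κ := by simpa [κ] using Nat.cast_le (α := ℝ).mpr hI
      have hmem : (I.centroid ℝ fun i : Ω => (i : E)) ∈ Ω := by
        rw [I.centroid_eq_centerMass hIne]
        exact hconv.centerMass_mem (fun _ _ => by simp) (by simp [hIne.card_pos.ne'])
          fun i _ => i.2
      refine ⟨I.centroid ℝ fun i : Ω => (i : E), Set.mem_iInter₂.mpr fun y hy =>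
        ⟨hmem, Set.mem_iInter₂.mpr fun f hf => ?_⟩⟩
      exact (apply_le_card_mul_apply_centroid hf hy).trans
        (mul_le_mul_of_nonneg_right hcard (hf _ hmem))
  obtain ⟨c, hc⟩ := hF
  rw [Set.mem_iInter] at hc
  obtain ⟨y₀, hy₀⟩ := hne
  exact ⟨c, (hc ⟨y₀, hy₀⟩).1, fun f hf y hy => Set.mem_iInter₂.mp (hc ⟨y, hy⟩).2 f hf⟩

end Convex

section Scalar

variable {σ X Y : ℝ}

lemma mul_le_sqrt_mul_of_sq_mul_le (hX : 0 ≤ X) (h : σ ^ 2 * X ≤ Y) : σ * X ≤ √(X * Y) :=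
  Real.le_sqrt_of_sq_le (by nlinarith [mul_le_mul_of_nonneg_right h hX])

lemma mul_sqrt_mul_le_of_sq_mul_le (hσ : 0 ≤ σ) (hX : 0 ≤ X) (h : σ ^ 2 * Y ≤ X) :
    σ * √(X * Y) ≤ X := by
  rw [← Real.sqrt_sq hσ, ← Real.sqrt_mul (sq_nonneg σ)]
  exact Real.sqrt_le_iff.mpr ⟨hX, by nlinarith [mul_le_mul_of_nonneg_left h hX]⟩

lemma mul_abs_sub_le_sqrt_mul (hσ : 0 ≤ σ) (hX : 0 ≤ X) (hY : 0 ≤ Y) (hXY : σ ^ 2 * X ≤ Y)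
    (hYX : σ ^ 2 * Y ≤ X) : σ * |X - Y| ≤ √(X * Y) := by
  rcases le_total Y X with h | h
  · rw [abs_of_nonneg (sub_nonneg.mpr h)]
    nlinarith [mul_le_sqrt_mul_of_sq_mul_le hX hXY, mul_nonneg hσ hY]
  · rw [abs_of_nonpos (sub_nonpos.mpr h), mul_comm X]
    nlinarith [mul_le_sqrt_mul_of_sq_mul_le hY hYX, mul_nonneg hσ hX]

lemma abs_cos_mul_add_sin_mul_le {D : ℝ} (hX : 0 ≤ X) (hY : 0 ≤ Y) (hD : D ^ 2 ≤ X * Y) (θ : ℝ) :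
    |Real.cos θ * ((X - Y) / 2) + Real.sin θ * D| ≤ (X + Y) / 2 := by
  refine abs_le_of_sq_le_sq ?_ (by positivity)
  calc (Real.cos θ * ((X - Y) / 2) + Real.sin θ * D) ^ 2
      ≤ (Real.sin θ ^ 2 + Real.cos θ ^ 2) * (((X - Y) / 2) ^ 2 + D ^ 2) := by
        nlinarith [sq_nonneg (Real.cos θ * D - Real.sin θ * ((X - Y) / 2))]
    _ = ((X - Y) / 2) ^ 2 + D ^ 2 := by rw [Real.sin_sq_add_cos_sq, one_mul]
    _ ≤ ((X + Y) / 2) ^ 2 := by nlinarith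

lemma half_le_sin {θ : ℝ} (hθ0 : 0 ≤ θ) (hθ1 : θ ≤ 1) : θ / 2 ≤ Real.sin θ := by
  have := Real.mul_le_sin hθ0 (by linarith [Real.pi_gt_three])
  refine le_trans ?_ this
  rw [div_eq_inv_mul]
  gcongr
  rw [inv_eq_one_div, div_le_div_iff₀ two_pos Real.pi_pos]
  linarith [Real.pi_lt_four]

end Scalar

/-! ### Moving points along inscribed ellipses -/

section InscribedEllipse

variable {E : Type*} [NormedAddCommGroup E] [NormedSpace ℝ E] {Ω : Set E}

lemma ellipse_midpoint (c x v : E) (θ : ℝ) :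
    ellipse (midpoint ℝ c x) ((1 / 2 : ℝ) • (x - c)) v θ =
      AffineMap.lineMap x c ((1 - Real.cos θ) / 2) + Real.sin θ • v := by
  rw [ellipse, midpoint_eq_smul_add, AffineMap.lineMap_apply_module', invOf_eq_inv]
  module

lemma ellipse_midpoint_mem (hconv : Convex ℝ Ω) (hclosed : IsClosed Ω) {c x v : E} (hc : c ∈ Ω)
    (hx : x ∈ Ω) (hv : ∀ f ∈ nonnegAffine Ω, (f.contLinear v) ^ 2 ≤ f x * f c) (θ : ℝ) :
    ellipse (midpoint ℝ c x) ((1 / 2 : ℝ) • (x - c)) v θ ∈ Ω := by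
  refine mem_of_forall_nonnegAffine hconv hclosed fun f hf => ?_
  have habs := abs_cos_mul_add_sin_mul_le (hf x hx) (hf c hc) (hv f hf) θ
  have happly : f (ellipse (midpoint ℝ c x) ((1 / 2 : ℝ) • (x - c)) v θ) =
      (f x + f c) / 2 + (Real.cos θ * ((f x - f c) / 2) + Real.sin θ * f.contLinear v) := by
    rw [ellipse_midpoint, apply_add_eq, map_smul, f.apply_lineMap,
      AffineMap.lineMap_apply_module', smul_eq_mul, smul_eq_mul]
    ring
  rw [happly]
  linarith [(abs_le.mp habs).1]

end InscribedEllipse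

section Polynomial

variable {ι : Type*} {Ω : Set (ι → ℝ)} {c x z : ι → ℝ} {Q : MvPolynomial ι ℝ} {n : ℕ} {M : ℝ}

lemma abs_eval_ellipse_midpoint_sub_le [Fintype ι] (hconv : Convex ℝ Ω) (hclosed : IsClosed Ω)
    (hc : c ∈ Ω) (hx : x ∈ Ω) {v : ι → ℝ}
    (hv : ∀ f ∈ nonnegAffine Ω, (f.contLinear v) ^ 2 ≤ f x * f c)
    (hQ : Q.totalDegree ≤ n) (hM : ∀ y ∈ Ω, |MvPolynomial.eval y Q| ≤ M) (θ : ℝ) :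
    |MvPolynomial.eval (AffineMap.lineMap x c ((1 - Real.cos θ) / 2) + Real.sin θ • v) Q -
      MvPolynomial.eval x Q| ≤ 7 * n * |θ| * M := by
  have := abs_eval_ellipse_sub_le hQ
    (fun φ => hM _ (ellipse_midpoint_mem hconv hclosed hc hx hv φ)) θ
  simpa only [ellipse_midpoint, Real.cos_zero, sub_self, zero_div, AffineMap.lineMap_apply_zero,
    Real.sin_zero, zero_smul, add_zero] using this

lemma two_mul_arcsin_le {σ : ℝ} (hσ0 : 0 ≤ σ) (hσ1 : σ ≤ 1) : 2 * Real.arcsin σ ≤ 4 * σ := by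
  have h := Real.mul_le_sin (Real.arcsin_nonneg.mpr hσ0) (Real.arcsin_le_pi_div_two σ)
  rw [Real.sin_arcsin (by linarith) hσ1, div_mul_eq_mul_div, div_le_iff₀ Real.pi_pos] at h
  nlinarith [Real.pi_lt_four]

lemma abs_eval_lineMap_sub_le [Finite ι] (hconv : Convex ℝ Ω) (hclosed : IsClosed Ω)
    (hc : c ∈ Ω) (hz : z ∈ Ω) {σ : ℝ} (hσ0 : 0 ≤ σ) (hσ1 : σ ≤ 1) (hQ : Q.totalDegree ≤ n)
    (hM : ∀ y ∈ Ω, |MvPolynomial.eval y Q| ≤ M) :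
    |MvPolynomial.eval (AffineMap.lineMap z c (σ ^ 2)) Q - MvPolynomial.eval z Q|
      ≤ 28 * n * σ * M := by
  cases nonempty_fintype ι
  have hM0 : 0 ≤ M := (abs_nonneg _).trans (hM z hz)
  have hcos : (1 - Real.cos (2 * Real.arcsin σ)) / 2 = σ ^ 2 := by
    rw [Real.cos_two_mul, Real.cos_sq', Real.sin_arcsin (by linarith) hσ1]
    ring
  have h := abs_eval_ellipse_midpoint_sub_le hconv hclosed hc hz (v := 0)
    (fun f hf => by simpa using mul_nonneg (hf z hz) (hf c hc)) hQ hM (2 * Real.arcsin σ)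
  rw [hcos, smul_zero, add_zero,
    abs_of_nonneg (mul_nonneg two_pos.le (Real.arcsin_nonneg.mpr hσ0))] at h
  refine h.trans ?_
  calc 7 * n * (2 * Real.arcsin σ) * M ≤ 7 * n * (4 * σ) * M :=
        mul_le_mul_of_nonneg_right
          (mul_le_mul_of_nonneg_left (two_mul_arcsin_le hσ0 hσ1) (by positivity)) hM0
    _ = 28 * n * σ * M := by ring

end Polynomial

/-! ### Cells -/

section Cell

variable {E : Type*} [NormedAddCommGroup E] [NormedSpace ℝ E] {Ω : Set E}

/-- The points of `Ω` at which every nonnegative affine functional is at least `σ ^ 2` times its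
value at `c`. -/
def deepPart (Ω : Set E) (c : E) (σ : ℝ) : Set E :=
  {x ∈ Ω | ∀ f ∈ nonnegAffine Ω, σ ^ 2 * f c ≤ f x}

/-- The cell of radius `ρ` about `x` with respect to the base point `c`: the points `y` that every
nonnegative affine functional `f` moves by at most `ρ * √(f x * f c)`. For a point `x` at depth `t`
it has size about `ρ * √t` across the boundary. -/
def cell (Ω : Set E) (c x : E) (ρ : ℝ) : Set E :=
  {y | ∀ f ∈ nonnegAffine Ω, |f y - f x| ≤ ρ * √(f x * f c)}

variable {c x y z : E} {σ ρ : ℝ}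

lemma lineMap_mem_deepPart (hconv : Convex ℝ Ω) (hc : c ∈ Ω) (hz : z ∈ Ω) (hσ0 : 0 ≤ σ)
    (hσ1 : σ ≤ 1) : AffineMap.lineMap z c (σ ^ 2) ∈ deepPart Ω c σ := by
  have hσ2 : σ ^ 2 ≤ 1 := pow_le_one₀ hσ0 hσ1
  refine ⟨hconv.lineMap_mem hz hc ⟨sq_nonneg σ, hσ2⟩, fun f hf => ?_⟩
  rw [f.apply_lineMap, AffineMap.lineMap_apply_ring]
  linarith [mul_nonneg (sub_nonneg.mpr hσ2) (hf z hz)]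

lemma deepPart_anti (hc : c ∈ Ω) {τ : ℝ} (hτ : 0 ≤ τ) (h : τ ≤ σ) :
    deepPart Ω c σ ⊆ deepPart Ω c τ := fun _ hx =>
  ⟨hx.1, fun f hf => le_trans (by gcongr; exact hf c hc) (hx.2 f hf)⟩

lemma isClosed_cell : IsClosed (cell Ω c x ρ) := by
  have hcell : cell Ω c x ρ =
      ⋂ f ∈ nonnegAffine Ω, {y | |f y - f x| ≤ ρ * √(f x * f c)} := by
    ext; simp [cell]
  rw [hcell]
  exact isClosed_biInter fun f _ =>
    isClosed_le (f.continuous.sub continuous_const).abs continuous_const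

lemma self_mem_cell (hρ : 0 ≤ ρ) : x ∈ cell Ω c x ρ := fun f _ => by
  rw [sub_self, abs_zero]
  positivity

lemma cell_mono {ρ' : ℝ} (h : ρ ≤ ρ') : cell Ω c x ρ ⊆ cell Ω c x ρ' := fun _ hy f hf =>
  (hy f hf).trans (by gcongr)

lemma abs_sub_le_half_of_mem_cell (hσ : 0 ≤ σ) (hρ : 2 * ρ ≤ σ)
    (hx : x ∈ deepPart Ω c σ) (hy : y ∈ cell Ω c x ρ) {f : E →ᴬ[ℝ] ℝ}
    (hf : f ∈ nonnegAffine Ω) : |f y - f x| ≤ f x / 2 := by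
  have hsqrt := mul_sqrt_mul_le_of_sq_mul_le hσ (hf x hx.1) (hx.2 f hf)
  nlinarith [hy f hf, mul_le_mul_of_nonneg_right hρ (Real.sqrt_nonneg (f x * f c))]

lemma cell_subset (hconv : Convex ℝ Ω) (hclosed : IsClosed Ω) (hσ : 0 ≤ σ)
    (hρ : 2 * ρ ≤ σ) (hx : x ∈ deepPart Ω c σ) : cell Ω c x ρ ⊆ Ω := fun y hy =>
  mem_of_forall_nonnegAffine hconv hclosed fun f hf => by
    linarith [(abs_le.mp (abs_sub_le_half_of_mem_cell hσ hρ hx hy hf)).1, hf x hx.1]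

lemma mem_cell_of_cell_inter_nonempty (hc : c ∈ Ω) (hσ : 0 ≤ σ) (hρ0 : 0 ≤ ρ) (hρ : 2 * ρ ≤ σ)
    (hx : x ∈ deepPart Ω c σ) (hz : z ∈ deepPart Ω c σ)
    (hxz : (cell Ω c x ρ ∩ cell Ω c z ρ).Nonempty) : z ∈ cell Ω c x (3 * ρ) := by
  intro f hf
  obtain ⟨y, hyx, hyz⟩ := hxz
  have hX := abs_le.mp (abs_sub_le_half_of_mem_cell hσ hρ hx hyx hf)
  have hZ := abs_le.mp (abs_sub_le_half_of_mem_cell hσ hρ hz hyz hf)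
  have hsqrt : √(f z * f c) ≤ 2 * √(f x * f c) := by
    rw [← Real.sqrt_sq two_pos.le, ← Real.sqrt_mul (sq_nonneg 2)]
    refine Real.sqrt_le_sqrt ?_
    nlinarith [hf c hc, hf x hx.1, mul_nonneg (hf x hx.1) (hf c hc)]
  calc |f z - f x| = |(f y - f x) - (f y - f z)| := by rw [sub_sub_sub_cancel_left]
    _ ≤ |f y - f x| + |f y - f z| := abs_sub _ _
    _ ≤ ρ * √(f x * f c) + ρ * (2 * √(f x * f c)) := by
        gcongr
        exacts [hyx f hf, (hyz f hf).trans (by gcongr)]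
    _ = 3 * ρ * √(f x * f c) := by ring

end Cell

section NearPoints

variable {ι : Type*} [Fintype ι] {Ω : Set (ι → ℝ)} {c x y : ι → ℝ} {Q : MvPolynomial ι ℝ} {n : ℕ}
  {θ κ M : ℝ}

lemma sq_inv_sin_mul_le {X Y D : ℝ} (hθ0 : 0 < θ) (hθ1 : θ ≤ 1) (hX : 0 ≤ X) (hY : 0 ≤ Y)
    (hXY : θ ^ 2 * X ≤ Y) (hYX : θ ^ 2 * Y ≤ X) (hD : |D| ≤ θ / 4 * √(X * Y)) :
    ((Real.sin θ)⁻¹ * (D + (1 - Real.cos θ) / 2 * (X - Y))) ^ 2 ≤ X * Y := by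
  have hsin := half_le_sin hθ0.le hθ1
  have hsin0 : 0 < Real.sin θ := by linarith
  have hcos : 0 ≤ 1 - Real.cos θ := by linarith [Real.cos_le_one θ]
  have hcos2 : 1 - Real.cos θ ≤ θ ^ 2 / 2 := by
    linarith [Real.one_sub_sq_div_two_le_cos (x := θ)]
  have hdiff := mul_abs_sub_le_sqrt_mul hθ0.le hX hY hXY hYX
  have hbound : |D + (1 - Real.cos θ) / 2 * (X - Y)| ≤ Real.sin θ * √(X * Y) := by
    calc |D + (1 - Real.cos θ) / 2 * (X - Y)|
        ≤ |D| + (1 - Real.cos θ) / 2 * |X - Y| := by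
          refine (abs_add_le _ _).trans_eq ?_
          rw [abs_mul, abs_of_nonneg (by positivity : 0 ≤ (1 - Real.cos θ) / 2)]
      _ ≤ θ / 4 * √(X * Y) + θ ^ 2 / 2 / 2 * |X - Y| := by gcongr
      _ = θ / 4 * √(X * Y) + θ / 4 * (θ * |X - Y|) := by ring
      _ ≤ θ / 4 * √(X * Y) + θ / 4 * √(X * Y) := by gcongr
      _ = θ / 2 * √(X * Y) := by ring
      _ ≤ Real.sin θ * √(X * Y) := by gcongr
  rw [← Real.sq_sqrt (mul_nonneg hX hY), sq_le_sq, abs_mul, abs_inv, abs_of_pos hsin0,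
    abs_of_nonneg (Real.sqrt_nonneg _)]
  exact (inv_mul_le_iff₀ hsin0).mpr hbound

lemma abs_eval_sub_le_of_mem_cell (hconv : Convex ℝ Ω) (hclosed : IsClosed Ω)
    (hc : IsCenter Ω c κ) (hθ0 : 0 < θ) (hθ1 : θ ≤ 1) (hθκ : θ ^ 2 * κ ≤ 1)
    (hx : x ∈ deepPart Ω c θ) (hy : y ∈ cell Ω c x (θ / 4)) (hQ : Q.totalDegree ≤ n)
    (hM : ∀ y ∈ Ω, |MvPolynomial.eval y Q| ≤ M) :
    |MvPolynomial.eval y Q - MvPolynomial.eval x Q| ≤ 7 * n * θ * M := by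
  have hsin0 : Real.sin θ ≠ 0 := by linarith [half_le_sin hθ0.le hθ1]
  set v := (Real.sin θ)⁻¹ • (y - x + ((1 - Real.cos θ) / 2) • (x - c)) with hv
  have hvΩ : ∀ f ∈ nonnegAffine Ω, (f.contLinear v) ^ 2 ≤ f x * f c := by
    intro f hf
    have hX := hf x hx.1
    have hY := hf c hc.mem
    have hXY : θ ^ 2 * f x ≤ f c :=
      calc θ ^ 2 * f x ≤ θ ^ 2 * (κ * f c) := by gcongr; exact hc.apply_le f hf x hx.1
        _ = θ ^ 2 * κ * f c := by ring
        _ ≤ f c := mul_le_of_le_one_left hY hθκ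
    have hlinear : f.contLinear v =
        (Real.sin θ)⁻¹ * (f y - f x + (1 - Real.cos θ) / 2 * (f x - f c)) := by
      simp only [hv, map_smul, map_add, contLinear_sub_eq, smul_eq_mul]
    rw [hlinear]
    exact sq_inv_sin_mul_le hθ0 hθ1 hX hY hXY (hx.2 f hf) (hy f hf)
  have hellipse : AffineMap.lineMap x c ((1 - Real.cos θ) / 2) + Real.sin θ • v = y := by
    rw [hv, smul_inv_smul₀ hsin0, AffineMap.lineMap_apply_module']
    module
  have h := abs_eval_ellipse_midpoint_sub_le hconv hclosed hc.mem hx.1 hvΩ hQ hM θ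
  rwa [hellipse, abs_of_pos hθ0] at h

end NearPoints

/-! ### One-variable peaking polynomials -/

section Chebyshev

open Polynomial Real

lemma sub_mul_eval_divByMonic_X_sub_C {R : Type*} [CommRing R] (f : R[X]) (a x : R) :
    (x - a) * (f /ₘ (X - C a)).eval x = f.eval x - f.eval a := by
  simpa using congrArg (eval x) (X_sub_C_mul_divByMonic_eq_sub_modByMonic f a)

lemma eval_divByMonic_X_sub_C_self {R : Type*} [CommRing R] (f : R[X]) (a : R) :
    (f /ₘ (X - C a)).eval a = f.derivative.eval a := by
  simpa using
    congrArg (eval a) (divByMonic_add_X_sub_C_mul_derivative_divByMonic_eq_derivative f a)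

lemma exists_nat_mul_mem_Ico {φ a : ℝ} (hφ : 0 < φ) (ha : 0 ≤ a) :
    ∃ k : ℕ, a ≤ k * φ ∧ k * φ < a + φ := by
  refine ⟨⌈a / φ⌉₊, (div_le_iff₀ hφ).mp (Nat.le_ceil _), ?_⟩
  calc ⌈a / φ⌉₊ * φ < (a / φ + 1) * φ := by
        gcongr
        exact Nat.ceil_lt_add_one (by positivity)
    _ = a + φ := by field_simp

lemma half_le_sin_of_mem_Icc {w : ℝ} (hw : w ∈ Set.Icc (π / 6) (π - π / 6)) : 1 / 2 ≤ sin w := by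
  rw [← sin_pi_div_six]
  rcases le_total w (π / 2) with h | h
  · exact sin_le_sin_of_le_of_le_pi_div_two (by linarith [pi_pos]) h hw.1
  · rw [← sin_pi_sub w]
    exact sin_le_sin_of_le_of_le_pi_div_two (by linarith [pi_pos]) (by linarith)
      (by linarith [hw.2])

lemma exists_half_le_abs_sin_nat_mul {φ : ℝ} (hφ0 : 0 < φ) (hφ1 : φ ≤ π / 2) (n : ℕ) :
    ∃ k : ℕ, n ≤ k ∧ (k : ℝ) ≤ n + 2 * π / φ ∧ 1 / 2 ≤ |sin (k * φ)| := by
  have hpi := pi_pos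
  obtain ⟨q, hq1, hq2⟩ := exists_nat_mul_mem_Ico hpi (a := n * φ) (by positivity)
  obtain ⟨k, hk1, hk2⟩ := exists_nat_mul_mem_Ico hφ0 (a := q * π + π / 6) (by positivity)
  refine ⟨k, ?_, ?_, ?_⟩
  · have : (n : ℝ) * φ ≤ k * φ := by linarith
    exact_mod_cast le_of_mul_le_mul_right this hφ0
  · rw [← sub_le_iff_le_add', le_div_iff₀ hφ0]
    linarith
  · have hshift : (k : ℝ) * φ = (k * φ - q * π) + q * π := by ring
    rw [hshift, sin_add_nat_mul_pi, abs_mul, abs_pow, abs_neg, abs_one, one_pow, one_mul]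
    exact (half_le_sin_of_mem_Icc ⟨by linarith, by linarith⟩).trans (le_abs_self _)

lemma mul_abs_sub_le_abs_cos_sub_cos {φ ψ : ℝ} (hφ : 0 ≤ φ) (hψ : 0 ≤ ψ) (h : ψ + φ ≤ π) :
    2 / π ^ 2 * ((ψ + φ) * |ψ - φ|) ≤ |cos ψ - cos φ| := by
  have hpi := pi_pos
  have hadd := mul_abs_le_abs_sin (x := (ψ + φ) / 2)
    (abs_le.mpr ⟨by linarith, by linarith⟩)
  have hsub := mul_abs_le_abs_sin (x := (ψ - φ) / 2)
    (abs_le.mpr ⟨by linarith, by linarith⟩)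
  rw [abs_of_nonneg (by positivity : 0 ≤ (ψ + φ) / 2)] at hadd
  rw [abs_div, abs_two] at hsub
  rw [cos_sub_cos, abs_mul, abs_mul, abs_neg, abs_two]
  calc 2 / π ^ 2 * ((ψ + φ) * |ψ - φ|)
      = 2 * (2 / π * ((ψ + φ) / 2)) * (2 / π * (|ψ - φ| / 2)) := by field_simp
    _ ≤ 2 * |sin ((ψ + φ) / 2)| * |sin ((ψ - φ) / 2)| := by gcongr

/-- The quotient of `T_k - T_k(cos φ)` by `X - cos φ`; the constant term is absorbed by the
division with remainder. -/
noncomputable def chebyshevQuotient (k : ℕ) (φ : ℝ) : ℝ[X] :=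
  Chebyshev.T ℝ k /ₘ (X - C (cos φ))

variable {k : ℕ} {φ ψ : ℝ}

lemma natDegree_chebyshevQuotient_le : (chebyshevQuotient k φ).natDegree ≤ k := by
  rw [chebyshevQuotient, natDegree_divByMonic _ (monic_X_sub_C _), Chebyshev.natDegree_T,
    Int.natAbs_natCast]
  exact Nat.sub_le _ _

lemma cos_sub_cos_mul_eval_chebyshevQuotient :
    (cos ψ - cos φ) * (chebyshevQuotient k φ).eval (cos ψ) = cos (k * ψ) - cos (k * φ) := by
  rw [chebyshevQuotient, sub_mul_eval_divByMonic_X_sub_C, Chebyshev.T_real_cos,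
    Chebyshev.T_real_cos, Int.cast_natCast]

lemma eval_chebyshevQuotient_cos_mul_sin :
    (chebyshevQuotient k φ).eval (cos φ) * sin φ = k * sin (k * φ) := by
  have hU := Chebyshev.U_real_cos φ (k - 1)
  push_cast at hU
  rw [sub_add_cancel] at hU
  rw [chebyshevQuotient, eval_divByMonic_X_sub_C_self, Chebyshev.T_derivative_eq_U, eval_mul,
    mul_assoc, hU]
  simp

lemma abs_eval_chebyshevQuotient_mul_le (hφ0 : 0 ≤ φ) (hφ1 : φ ≤ π / 2) (hψ0 : 0 ≤ ψ)
    (hψ1 : ψ ≤ π / 2) : |(chebyshevQuotient k φ).eval (cos ψ)| * φ ≤ π ^ 2 / 2 * k := by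
  have hpi := pi_pos
  set q := (chebyshevQuotient k φ).eval (cos ψ) with hq
  rcases eq_or_ne ψ φ with rfl | hne
  · have hsin : |q| * sin ψ ≤ k := by
      rw [← abs_of_nonneg (sin_nonneg_of_nonneg_of_le_pi hψ0 (by linarith)), ← abs_mul, hq,
        eval_chebyshevQuotient_cos_mul_sin, abs_mul, Nat.abs_cast]
      exact mul_le_of_le_one_right (Nat.cast_nonneg k) (abs_sin_le_one _)
    calc |q| * ψ = π / 2 * (|q| * (2 / π * ψ)) := by field_simp
      _ ≤ π / 2 * (|q| * sin ψ) := by gcongr; exact mul_le_sin hψ0 hψ1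
      _ ≤ π / 2 * k := by gcongr
      _ ≤ π ^ 2 / 2 * k := by gcongr; nlinarith [pi_gt_three]
  · have hpos : 0 < |ψ - φ| := abs_pos.mpr (sub_ne_zero.mpr hne)
    refine le_of_mul_le_mul_right ?_ hpos
    calc |q| * φ * |ψ - φ| ≤ π ^ 2 / 2 * (|q| * (2 / π ^ 2 * ((ψ + φ) * |ψ - φ|))) := by
          rw [show π ^ 2 / 2 * (|q| * (2 / π ^ 2 * ((ψ + φ) * |ψ - φ|))) =
            |q| * (ψ + φ) * |ψ - φ| by field_simp]
          gcongr
          linarith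
      _ ≤ π ^ 2 / 2 * (|q| * |cos ψ - cos φ|) := by
          gcongr
          exact mul_abs_sub_le_abs_cos_sub_cos hφ0 hψ0 (by linarith)
      _ = π ^ 2 / 2 * |cos (k * ψ) - cos (k * φ)| := by
          rw [← abs_mul, mul_comm q, hq, cos_sub_cos_mul_eval_chebyshevQuotient]
      _ ≤ π ^ 2 / 2 * |k * ψ - k * φ| :=
          mul_le_mul_of_nonneg_left (Real.abs_cos_sub_cos_le _ _) (by positivity)
      _ = π ^ 2 / 2 * k * |ψ - φ| := by rw [← mul_sub, abs_mul, Nat.abs_cast, mul_assoc]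

lemma le_abs_eval_chebyshevQuotient_cos_mul (hφ0 : 0 ≤ φ) (hφ1 : φ ≤ π)
    (hk : 1 / 2 ≤ |sin (k * φ)|) :
    k / 2 ≤ |(chebyshevQuotient k φ).eval (cos φ)| * sin φ := by
  rw [← abs_of_nonneg (sin_nonneg_of_nonneg_of_le_pi hφ0 hφ1), ← abs_mul,
    eval_chebyshevQuotient_cos_mul_sin, abs_mul, Nat.abs_cast, div_eq_mul_one_div]
  gcongr

lemma abs_eval_chebyshevQuotient_le (hφ0 : 0 < φ) (hφ1 : φ ≤ π / 2) (hψ0 : 0 ≤ ψ)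
    (hψ1 : ψ ≤ π / 2) (hk : 1 / 2 ≤ |sin (k * φ)|) :
    |(chebyshevQuotient k φ).eval (cos ψ)| ≤ 10 * |(chebyshevQuotient k φ).eval (cos φ)| := by
  have hupper := abs_eval_chebyshevQuotient_mul_le (k := k) hφ0.le hφ1 hψ0 hψ1
  have hlower := le_abs_eval_chebyshevQuotient_cos_mul hφ0.le (by linarith [pi_pos]) hk
  have hpi : π ^ 2 ≤ 10 := by nlinarith [pi_lt_d2, pi_pos]
  refine le_of_mul_le_mul_right ?_ hφ0
  calc |(chebyshevQuotient k φ).eval (cos ψ)| * φ ≤ π ^ 2 * (k / 2) := by linarith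
    _ ≤ 10 * (|(chebyshevQuotient k φ).eval (cos φ)| * φ) := by
        gcongr
        exact hlower.trans (by gcongr; exact sin_le hφ0.le)
    _ = 10 * |(chebyshevQuotient k φ).eval (cos φ)| * φ := by ring

lemma abs_eval_chebyshevQuotient_mul_abs_cos_sub_cos_le (hφ0 : 0 ≤ φ) (hφ1 : φ ≤ π)
    (hk : 1 / 2 ≤ |sin (k * φ)|) :
    |(chebyshevQuotient k φ).eval (cos ψ)| * |cos ψ - cos φ| * k ≤
      4 * sin φ * |(chebyshevQuotient k φ).eval (cos φ)| := by
  have hlower := le_abs_eval_chebyshevQuotient_cos_mul hφ0 hφ1 hk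
  have hupper : |(chebyshevQuotient k φ).eval (cos ψ)| * |cos ψ - cos φ| ≤ 2 := by
    rw [← abs_mul, mul_comm, cos_sub_cos_mul_eval_chebyshevQuotient]
    exact (abs_sub _ _).trans (by linarith [abs_cos_le_one (k * ψ), abs_cos_le_one (k * φ)])
  nlinarith [mul_le_mul_of_nonneg_right hupper (Nat.cast_nonneg (α := ℝ) k)]

lemma exists_peaking_polynomial_cos {n : ℕ} (hn : 0 < n) (hφ0 : 0 < φ) (hφ1 : φ ≤ π / 2) :
    ∃ p : ℝ[X], (p.natDegree : ℝ) ≤ n + 2 * π / φ ∧ p.eval (cos φ) = 1 ∧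
      ∀ ψ ∈ Set.Icc 0 (π / 2),
        |p.eval (cos ψ)| ≤ 10 ∧ |p.eval (cos ψ)| * |cos ψ - cos φ| ≤ 4 * sin φ / n := by
  have hφ2 : φ ≤ π := by linarith
  obtain ⟨k, hnk, hkn, hk⟩ := exists_half_le_abs_sin_nat_mul hφ0 hφ1 n
  have hn0 : (0 : ℝ) < n := Nat.cast_pos.mpr hn
  have hnk' : (n : ℝ) ≤ k := Nat.cast_le.mpr hnk
  set q := chebyshevQuotient k φ
  have hqφ : 0 < |q.eval (cos φ)| := by
    refine pos_of_mul_pos_left (lt_of_lt_of_le ?_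
      (le_abs_eval_chebyshevQuotient_cos_mul hφ0.le hφ2 hk))
      (sin_nonneg_of_nonneg_of_le_pi hφ0.le hφ2)
    linarith
  have habs : ∀ x, |(C (q.eval (cos φ))⁻¹ * q).eval x| = |q.eval x| / |q.eval (cos φ)| := by
    intro x
    rw [eval_mul, eval_C, abs_mul, abs_inv, inv_mul_eq_div]
  refine ⟨C (q.eval (cos φ))⁻¹ * q, ?_, ?_, fun ψ hψ => ⟨?_, ?_⟩⟩
  · exact hkn.trans'
      (Nat.cast_le.mpr ((natDegree_C_mul_le _ _).trans natDegree_chebyshevQuotient_le))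
  · rw [eval_mul, eval_C, inv_mul_cancel₀ (abs_pos.mp hqφ)]
  · rw [habs, div_le_iff₀ hqφ]
    exact abs_eval_chebyshevQuotient_le hφ0 hφ1 hψ.1 hψ.2 hk
  · rw [habs, div_mul_eq_mul_div, div_le_iff₀ hqφ, div_mul_eq_mul_div, le_div_iff₀ hn0]
    exact (by gcongr : _ ≤ |q.eval (cos ψ)| * |cos ψ - cos φ| * k).trans
      (abs_eval_chebyshevQuotient_mul_abs_cos_sub_cos_le hφ0.le hφ2 hk)

lemma sqrt_le_arccos_one_sub {t : ℝ} (ht0 : 0 ≤ t) (ht1 : t ≤ 1) : √t ≤ arccos (1 - t) := by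
  refine sqrt_le_iff.mpr ⟨arccos_nonneg _, ?_⟩
  have := one_sub_sq_div_two_le_cos (x := arccos (1 - t))
  rw [cos_arccos (by linarith) (by linarith)] at this
  nlinarith

lemma sin_arccos_one_sub_le {t : ℝ} (ht : 0 ≤ t) : sin (arccos (1 - t)) ≤ 2 * √t := by
  rw [sin_arccos, ← sqrt_sq (two_pos (α := ℝ)).le, ← sqrt_mul (sq_nonneg 2)]
  exact sqrt_le_sqrt (by nlinarith)

/-- The gain `√t` near `t = 0` comes from the faster oscillation of Chebyshev polynomials at the end
points of their interval. -/
lemma exists_peaking_polynomial {n : ℕ} (hn : 0 < n) {t : ℝ} (ht0 : 0 < t) (ht1 : t ≤ 1) :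
    ∃ p : ℝ[X], (p.natDegree : ℝ) ≤ n + 2 * π / √t ∧ p.eval t = 1 ∧
      ∀ s ∈ Set.Icc (0 : ℝ) 1, |p.eval s| ≤ 10 ∧ |p.eval s| * |s - t| ≤ 10 * √t / n := by
  have hcos : ∀ s ∈ Set.Icc (0 : ℝ) 1, cos (arccos (1 - s)) = 1 - s := fun s hs =>
    cos_arccos (by linarith [hs.2]) (by linarith [hs.1])
  obtain ⟨p, hdeg, hone, hp⟩ := exists_peaking_polynomial_cos hn
    (arccos_pos.mpr (by linarith : 1 - t < 1)) (arccos_le_pi_div_two.mpr (by linarith))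
  rw [hcos t ⟨ht0.le, ht1⟩] at hone hp
  refine ⟨p.comp (1 - X), ?_, by simpa using hone, fun s hs => ?_⟩
  · have hlinear : (1 - X : ℝ[X]).natDegree ≤ 1 := by compute_degree
    have hcomp : (p.comp (1 - X)).natDegree ≤ p.natDegree :=
      natDegree_comp_le.trans (mul_le_of_le_one_right' hlinear)
    calc ((p.comp (1 - X)).natDegree : ℝ) ≤ n + 2 * π / arccos (1 - t) :=
          (Nat.cast_le.mpr hcomp).trans hdeg
      _ ≤ n + 2 * π / √t := by
        gcongr
        exact sqrt_le_arccos_one_sub ht0.le ht1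
  · obtain ⟨hbound, hdecay⟩ := hp (arccos (1 - s))
      ⟨arccos_nonneg _, arccos_le_pi_div_two.mpr (by linarith [hs.2])⟩
    rw [hcos s hs] at hbound hdecay
    rw [sub_sub_sub_cancel_left, abs_sub_comm] at hdecay
    rw [eval_comp, eval_sub, eval_one, eval_X]
    refine ⟨hbound, hdecay.trans (div_le_div_of_nonneg_right ?_ n.cast_nonneg)⟩
    linarith [sin_arccos_one_sub_le ht0.le, sqrt_nonneg t]

end Chebyshev

/-! ### Frames of nonnegative affine functionals -/

section Auerbach

variable {V : Type*} [NormedAddCommGroup V] [NormedSpace ℝ V] [FiniteDimensional ℝ V] {S : Set V}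

lemma bddAbove_abs_det {ι : Type*} [Fintype ι] [DecidableEq ι] (e : Module.Basis ι ℝ V)
    (hS : Bornology.IsBounded S) :
    BddAbove ((fun v => |e.det v|) '' {v : ι → V | ∀ i, v i ∈ S}) := by
  have hcont : Continuous fun v : ι → V => |e.det v| := by
    simp only [e.det_apply]
    refine (Continuous.matrix_det (continuous_matrix fun i j => ?_)).abs
    exact (e.coord i).continuous_of_finiteDimensional.comp (continuous_apply j)
  refine ((isCompact_univ_pi fun _ => hS.isCompact_closure).bddAbove_image
    hcont.continuousOn).mono (Set.image_mono ?_)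
  exact fun v hv i _ => subset_closure (hv i)

lemma exists_basis_mem (hspan : Submodule.span ℝ S = ⊤) :
    ∃ e : Module.Basis (Fin (Module.finrank ℝ V)) ℝ V, ∀ i, e i ∈ S := by
  let b := Module.Basis.ofSpan hspan.ge
  refine ⟨b.reindex (b.indexEquiv (Module.finBasis ℝ V)), fun i => ?_⟩
  rw [b.reindex_apply]
  exact Module.Basis.ofSpan_subset hspan.ge (Set.mem_range_self _)

/-- The basis is chosen to maximize the determinant up to a factor of two; Cramer's rule then bounds
the coordinates. -/
lemma exists_basis_mem_abs_repr_le_two (hS : Bornology.IsBounded S)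
    (hspan : Submodule.span ℝ S = ⊤) :
    ∃ b : Module.Basis (Fin (Module.finrank ℝ V)) ℝ V,
      (∀ i, b i ∈ S) ∧ ∀ a ∈ S, ∀ i, |b.repr a i| ≤ 2 := by
  obtain ⟨e, he⟩ := exists_basis_mem hspan
  set D := (fun v => |e.det v|) '' {v | ∀ i, v i ∈ S}
  have hD := bddAbove_abs_det e hS
  have hpos : 0 < sSup D := lt_csSup_of_lt hD ⟨e, he, rfl⟩ (by simp [e.det_self])
  obtain ⟨_, ⟨v, hv, rfl⟩, hvD⟩ := exists_lt_of_lt_csSup (s := D) ⟨_, e, he, rfl⟩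
    (half_lt_self hpos)
  have hdet : 0 < |e.det v| := (half_pos hpos).trans hvD
  obtain ⟨hli, hsp⟩ := e.is_basis_iff_det.mpr (abs_pos.mp hdet).isUnit
  refine ⟨Module.Basis.mk hli hsp.ge, fun i => by simpa using hv i, fun a ha i => ?_⟩
  have hupdate : ∀ j, Function.update v i a j ∈ S := fun j => by
    rcases eq_or_ne j i with rfl | h
    · simpa using ha
    · simpa [h] using hv j
  have hcramer : e.det v * (Module.Basis.mk hli hsp.ge).repr a i =
      e.det (Function.update v i a) :=
    LinearMap.congr_fun (e.det_smul_mk_coord_eq_det_update hli hsp.ge i) a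
  have hle : |e.det (Function.update v i a)| ≤ sSup D := le_csSup hD ⟨_, hupdate, rfl⟩
  rw [← hcramer, abs_mul] at hle
  refine le_of_mul_le_mul_left ?_ hdet
  linarith

end Auerbach

section Frame

variable {E : Type*} [NormedAddCommGroup E] [NormedSpace ℝ E] {Ω : Set E} {c x : E} {κ σ : ℝ}

lemma IsCenter.one_le (hc : IsCenter Ω c κ) : 1 ≤ κ := by
  simpa using hc.apply_le (ContinuousAffineMap.const ℝ E 1) (fun _ _ => zero_le_one) c hc.mem

lemma exists_norm_contLinear_mul_le (hint : (interior Ω).Nonempty) (hc : IsCenter Ω c κ) :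
    ∃ ε > 0, ∀ f ∈ nonnegAffine Ω, ‖f.contLinear‖ ≤ κ * f c / ε := by
  obtain ⟨x₀, hx₀⟩ := hint
  obtain ⟨ε, hε, hball⟩ :=
    Metric.nhds_basis_closedBall.mem_iff.mp (mem_interior_iff_mem_nhds.mp hx₀)
  refine ⟨ε, hε, fun f hf => f.contLinear.opNorm_bound_of_ball_bound hε _ fun v hv => ?_⟩
  have hmem : x₀ + v ∈ Ω := hball (by simpa using hv)
  rw [← add_sub_cancel_left x₀ v, contLinear_sub_eq, Real.norm_eq_abs, abs_le]
  constructor <;> linarith [hf _ hmem, hc.apply_le f hf _ hmem, hf x₀ (interior_subset hx₀),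
    hc.apply_le f hf x₀ (interior_subset hx₀)]

lemma contLinear_eq_zero_of_apply_eq_zero (hint : (interior Ω).Nonempty) (hc : IsCenter Ω c κ)
    {f : E →ᴬ[ℝ] ℝ} (hf : f ∈ nonnegAffine Ω) (hfc : f c = 0) : f.contLinear = 0 := by
  obtain ⟨ε, -, hbound⟩ := exists_norm_contLinear_mul_le hint hc
  simpa [hfc] using hbound f hf

/-- The linear part of `f`, rescaled so that `cell Ω c x ρ` consists of the points `y` at which
these functionals are at most `ρ` in absolute value at `y - x`. -/
noncomputable def normalizedLinear (c x : E) (f : E →ᴬ[ℝ] ℝ) : StrongDual ℝ E :=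
  (√(f x * f c))⁻¹ • f.contLinear

lemma normalizedLinear_smul {s : ℝ} (hs : 0 < s) (f : E →ᴬ[ℝ] ℝ) :
    normalizedLinear c x (s • f) = normalizedLinear c x f := by
  have hsqrt : √((s • f) x * (s • f) c) = s * √(f x * f c) := by
    rw [ContinuousAffineMap.smul_apply, ContinuousAffineMap.smul_apply, smul_eq_mul, smul_eq_mul,
      mul_mul_mul_comm, Real.sqrt_mul (mul_self_nonneg s), Real.sqrt_mul_self hs.le]
  rw [normalizedLinear, hsqrt, ContinuousAffineMap.smul_contLinear, smul_smul, mul_inv_rev,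
    inv_mul_cancel_right₀ hs.ne', normalizedLinear]

lemma sqrt_smul_normalizedLinear (hint : (interior Ω).Nonempty) (hc : IsCenter Ω c κ) (hσ : 0 < σ)
    (hx : x ∈ deepPart Ω c σ) {f : E →ᴬ[ℝ] ℝ} (hf : f ∈ nonnegAffine Ω) :
    √(f x * f c) • normalizedLinear c x f = f.contLinear := by
  rcases (hf c hc.mem).eq_or_lt with hfc | hfc
  · rw [normalizedLinear, contLinear_eq_zero_of_apply_eq_zero hint hc hf hfc.symm, smul_zero,
      smul_zero]
  · have hfx : 0 < f x := (by positivity : 0 < σ ^ 2 * f c).trans_le (hx.2 f hf)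
    exact smul_inv_smul₀ (Real.sqrt_pos.mpr (mul_pos hfx hfc)).ne' _

lemma isBounded_normalizedLinear_image (hint : (interior Ω).Nonempty) (hc : IsCenter Ω c κ)
    (hσ : 0 < σ) (hx : x ∈ deepPart Ω c σ) :
    Bornology.IsBounded (normalizedLinear c x '' nonnegAffine Ω) := by
  obtain ⟨ε, hε, hbound⟩ := exists_norm_contLinear_mul_le hint hc
  have hκ : 0 ≤ κ := zero_le_one.trans hc.one_le
  refine isBounded_iff_forall_norm_le.mpr ⟨κ / (ε * σ), ?_⟩
  rintro _ ⟨f, hf, rfl⟩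
  rw [normalizedLinear, norm_smul, norm_inv, Real.norm_eq_abs, abs_of_nonneg (Real.sqrt_nonneg _)]
  rcases (hf c hc.mem).eq_or_lt with hfc | hfc
  · rw [← hfc, mul_zero, Real.sqrt_zero, inv_zero, zero_mul]
    positivity
  have hsqrt : σ * f c ≤ √(f x * f c) :=
    (mul_le_sqrt_mul_of_sq_mul_le hfc.le (hx.2 f hf)).trans_eq (by rw [mul_comm])
  calc (√(f x * f c))⁻¹ * ‖f.contLinear‖ ≤ (σ * f c)⁻¹ * (κ * f c / ε) := by
        gcongr
        exact hbound f hf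
    _ = κ / (ε * σ) := by field_simp

lemma span_normalizedLinear_image (hcomp : IsCompact Ω) (hint : (interior Ω).Nonempty)
    (hc : IsCenter Ω c κ) (hσ : 0 < σ) (hx : x ∈ deepPart Ω c σ) :
    Submodule.span ℝ (normalizedLinear c x '' nonnegAffine Ω) = ⊤ := by
  refine Submodule.eq_top_iff'.mpr fun φ => ?_
  obtain ⟨y₀, -, hmin⟩ := hcomp.exists_isMinOn ⟨c, hc.mem⟩ φ.continuous.continuousOn
  have hf := toContinuousAffineMap_add_const_mem_nonnegAffine (φ := φ) (a := -φ y₀)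
    fun y hy => by linarith [isMinOn_iff.mp hmin y hy]
  set f := φ.toContinuousAffineMap + ContinuousAffineMap.const ℝ E (-φ y₀)
  have hlinear : f.contLinear = φ := by simp [f]
  rw [← hlinear, ← sqrt_smul_normalizedLinear hint hc hσ hx hf]
  exact Submodule.smul_mem _ _ (Submodule.subset_span ⟨f, hf, rfl⟩)

lemma exists_apply_eq_inv_of_normalizedLinear_ne_zero (hc : IsCenter Ω c κ) {f : E →ᴬ[ℝ] ℝ}
    (hf : f ∈ nonnegAffine Ω) (hne : normalizedLinear c x f ≠ 0) :
    ∃ g ∈ nonnegAffine Ω, g c = κ⁻¹ ∧ normalizedLinear c x g = normalizedLinear c x f := by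
  have hκ : 0 < κ := zero_lt_one.trans_le hc.one_le
  have hfc : 0 < f c := (hf c hc.mem).lt_of_ne fun h => hne (by simp [normalizedLinear, ← h])
  have hs : 0 < (κ * f c)⁻¹ := by positivity
  refine ⟨(κ * f c)⁻¹ • f, fun y hy => mul_nonneg hs.le (hf y hy), ?_, normalizedLinear_smul hs f⟩
  rw [ContinuousAffineMap.smul_apply, smul_eq_mul, mul_inv, inv_mul_cancel_right₀ hfc.ne']

lemma mem_cell_of_forall_abs_le (hint : (interior Ω).Nonempty) (hc : IsCenter Ω c κ) (hσ : 0 < σ)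
    (hx : x ∈ deepPart Ω c σ) {ι : Type*} [Fintype ι] (b : Module.Basis ι ℝ (StrongDual ℝ E))
    (hb : ∀ φ ∈ normalizedLinear c x '' nonnegAffine Ω, ∀ i, |b.repr φ i| ≤ 2) {r : ℝ} {y : E}
    (hy : ∀ i, |b i (y - x)| ≤ r) : y ∈ cell Ω c x (2 * Fintype.card ι * r) := by
  intro f hf
  set φ := normalizedLinear c x f
  have hsum : φ (y - x) = ∑ i, b.repr φ i * b i (y - x) := by
    conv_lhs => rw [← b.sum_repr φ]
    simp only [sum_apply, smul_apply, smul_eq_mul]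
  calc |f y - f x| = |φ (y - x)| * √(f x * f c) := by
        rw [← contLinear_sub_eq, ← sqrt_smul_normalizedLinear hint hc hσ hx hf,
          smul_apply, smul_eq_mul, abs_mul, abs_of_nonneg (Real.sqrt_nonneg _),
          mul_comm]
    _ ≤ (∑ _i : ι, 2 * r) * √(f x * f c) := by
        gcongr
        rw [hsum]
        refine (Finset.abs_sum_le_sum_abs _ _).trans (Finset.sum_le_sum fun i _ => ?_)
        rw [abs_mul]
        exact mul_le_mul (hb φ ⟨f, hf, rfl⟩ i) (hy i) (abs_nonneg _) two_pos.le
    _ = 2 * Fintype.card ι * r * √(f x * f c) := by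
        rw [Finset.sum_const, Finset.card_univ, nsmul_eq_mul]
        ring

variable [FiniteDimensional ℝ E]

lemma finrank_strongDual : Module.finrank ℝ (StrongDual ℝ E) = Module.finrank ℝ E :=
  (LinearMap.toContinuousLinearMap (𝕜 := ℝ) (E := E) (F' := ℝ)).finrank_eq.symm.trans
    Subspace.dual_finrank_eq

lemma exists_continuousLinearEquiv_of_dual_basis {ι : Type*} [Finite ι]
    (b : Module.Basis ι ℝ (StrongDual ℝ E)) : ∃ L : E ≃L[ℝ] (ι → ℝ), ∀ y i, L y i = b i y := by
  cases nonempty_fintype ι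
  have hinj : Function.Injective (LinearMap.pi fun i => (b i : E →ₗ[ℝ] ℝ)) := by
    refine (injective_iff_map_eq_zero _).mpr fun y hy => ?_
    refine SeparatingDual.eq_zero_of_forall_dual_eq_zero (R := ℝ) fun φ => ?_
    have hby : ∀ i, b i y = 0 := congrFun hy
    rw [← b.sum_repr φ, sum_apply]
    exact Finset.sum_eq_zero fun i _ => by
      rw [smul_apply, hby, smul_zero]
  have hrank : Module.finrank ℝ E = Module.finrank ℝ (ι → ℝ) := by
    rw [Module.finrank_pi, ← Module.finrank_eq_card_basis b, finrank_strongDual]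
  exact ⟨(LinearEquiv.ofInjectiveOfFinrankEq _ hinj hrank).toContinuousLinearEquiv,
    fun _ _ => rfl⟩

/-- The coordinates `L` are an Auerbach-type basis of normalized functionals; the value `κ⁻¹` at the
centre makes the `f i` take values in `[0, 1]` on `Ω`. -/
lemma exists_frame (hcomp : IsCompact Ω) (hint : (interior Ω).Nonempty) (hc : IsCenter Ω c κ)
    (hσ : 0 < σ) (hx : x ∈ deepPart Ω c σ) :
    ∃ (L : E ≃L[ℝ] (Fin (Module.finrank ℝ E) → ℝ)) (f : Fin (Module.finrank ℝ E) → E →ᴬ[ℝ] ℝ),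
      (∀ i, f i ∈ nonnegAffine Ω ∧ f i c = κ⁻¹ ∧
        ∀ y, f i y - f i x = √(f i x * κ⁻¹) * (L y i - L x i)) ∧
      ∀ r, 0 ≤ r → L ⁻¹' Metric.closedBall (L x) r ⊆ cell Ω c x (2 * Module.finrank ℝ E * r) := by
  have hbasis := exists_basis_mem_abs_repr_le_two (isBounded_normalizedLinear_image hint hc hσ hx)
    (span_normalizedLinear_image hcomp hint hc hσ hx)
  rw [finrank_strongDual] at hbasis
  obtain ⟨b, hb, hrepr⟩ := hbasis
  choose g hg hgb using hb
  choose f hf hfc hfg using fun i => exists_apply_eq_inv_of_normalizedLinear_ne_zero hc (hg i)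
    (by rw [hgb]; exact b.ne_zero i)
  obtain ⟨L, hL⟩ := exists_continuousLinearEquiv_of_dual_basis b
  have hLsub : ∀ i y, L y i - L x i = b i (y - x) := fun i y => by rw [hL, hL, map_sub]
  refine ⟨L, f, fun i => ⟨hf i, hfc i, fun y => ?_⟩, fun r hr y hy => ?_⟩
  · rw [hLsub, ← hgb, ← hfg, ← hfc i, ← contLinear_sub_eq,
      ← sqrt_smul_normalizedLinear hint hc hσ hx (hf i), smul_apply, smul_eq_mul]
  · have hy : ∀ i, |L y i - L x i| ≤ r := (dist_pi_le_iff hr).mp hy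
    simp only [hLsub] at hy
    simpa only [Fintype.card_fin] using mem_cell_of_forall_abs_le hint hc hσ hx b hrepr hy

end Frame

/-! ### Integrals of products in linear coordinates -/

section Integral

open MeasureTheory

variable {E : Type*} [NormedAddCommGroup E] [NormedSpace ℝ E] [MeasurableSpace E] [BorelSpace E]
  {μ : Measure E} [μ.IsAddHaarMeasure] {ι : Type*} [Fintype ι]

lemma exists_map_eq_smul_volume (L : E ≃L[ℝ] (ι → ℝ)) : ∃ a : NNReal, μ.map L = a • volume := by
  have := L.isAddHaarMeasure_map μ
  exact ⟨_, Measure.isAddLeftInvariant_eq_smul _ _⟩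

lemma measureReal_preimage_closedBall_pos (L : E ≃L[ℝ] (ι → ℝ)) (p : ι → ℝ) {r : ℝ} (hr : 0 < r) :
    0 < μ.real (L ⁻¹' Metric.closedBall p r) := by
  have := L.isAddHaarMeasure_map μ
  rw [← map_measureReal_apply L.continuous.measurable Metric.isClosed_closedBall.measurableSet]
  exact ENNReal.toReal_pos (Metric.measure_closedBall_pos _ p hr).ne' measure_closedBall_lt_top.ne

lemma integrable_prod_comp (L : E ≃L[ℝ] (ι → ℝ)) {g : ι → ℝ → ℝ} (hg : ∀ i, Integrable (g i)) :
    Integrable (fun y => ∏ i, g i (L y i)) μ := by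
  obtain ⟨a, ha⟩ := exists_map_eq_smul_volume (μ := μ) L
  have hint : Integrable (fun w : ι → ℝ => ∏ i, g i (w i)) (μ.map L) := by
    rw [ha]
    exact (Integrable.fintype_prod hg).smul_measure_nnreal
  exact hint.comp_measurable L.continuous.measurable

/-- Comparing with the measure of a box removes the Jacobian of `L`. -/
lemma integral_prod_comp_eq (L : E ≃L[ℝ] (ι → ℝ)) (g : ι → ℝ → ℝ) (p : ι → ℝ) {r : ℝ}
    (hr : 0 < r) : ∫ y, ∏ i, g i (L y i) ∂μ =
      (∏ i, (∫ w, g i w) / (2 * r)) * μ.real (L ⁻¹' Metric.closedBall p r) := by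
  obtain ⟨a, ha⟩ := exists_map_eq_smul_volume (μ := μ) L
  have hbox : μ.real (L ⁻¹' Metric.closedBall p r) = a * (2 * r) ^ Fintype.card ι := by
    rw [← map_measureReal_apply L.continuous.measurable Metric.isClosed_closedBall.measurableSet,
      ha, measureReal_nnreal_smul_apply, measureReal_def, Real.volume_pi_closedBall _ hr.le,
      ENNReal.toReal_ofReal (by positivity)]
  have hmap : ∫ y, ∏ i, g i (L y i) ∂μ = ∫ w, ∏ i, g i (w i) ∂(μ.map L) :=
    (L.toHomeomorph.measurableEmbedding.integral_map fun w => ∏ i, g i (w i)).symm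
  rw [hmap, ha, integral_smul_nnreal_measure, integral_fintype_prod_volume_eq_prod, hbox,
    Finset.prod_div_distrib, Finset.prod_const, Finset.card_univ, NNReal.smul_def, smul_eq_mul]
  field_simp

lemma integrable_inv_one_add_sq_div {w : ℝ} (hw : 0 < w) (p : ℝ) :
    Integrable fun s => (1 + ((s - p) / w) ^ 2)⁻¹ :=
  (integrable_inv_one_add_sq.comp_div hw.ne').comp_sub_right p

lemma integral_inv_one_add_sq_div {w : ℝ} (hw : 0 < w) (p : ℝ) :
    ∫ s, (1 + ((s - p) / w) ^ 2)⁻¹ = Real.pi * w := by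
  rw [integral_sub_right_eq_self fun s => (1 + (s / w) ^ 2)⁻¹,
    Measure.integral_comp_div fun s => (1 + s ^ 2)⁻¹, integral_univ_inv_one_add_sq, abs_of_pos hw,
    smul_eq_mul, mul_comm]

lemma setIntegral_le_of_le_prod {Ω : Set E} (hΩ : MeasurableSet Ω) {F : E → ℝ}
    (hF : IntegrableOn F Ω μ) (L : E ≃L[ℝ] (ι → ℝ)) (p : ι → ℝ) {a w r : ℝ} (ha : 0 ≤ a)
    (hw : 0 < w) (hr : 0 < r)
    (hle : ∀ y ∈ Ω, F y ≤ ∏ i, (a * (1 + ((L y i - p i) / w) ^ 2)⁻¹)) :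
    ∫ y in Ω, F y ∂μ ≤
      (a * Real.pi * w / (2 * r)) ^ Fintype.card ι * μ.real (L ⁻¹' Metric.closedBall p r) := by
  have hint : Integrable (fun y => ∏ i, (a * (1 + ((L y i - p i) / w) ^ 2)⁻¹)) μ :=
    integrable_prod_comp L (g := fun i s => a * (1 + ((s - p i) / w) ^ 2)⁻¹)
      fun i => (integrable_inv_one_add_sq_div hw (p i)).const_mul a
  calc ∫ y in Ω, F y ∂μ ≤ ∫ y in Ω, ∏ i, (a * (1 + ((L y i - p i) / w) ^ 2)⁻¹) ∂μ :=
        setIntegral_mono_on hF hint.integrableOn hΩ hle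
    _ ≤ ∫ y, ∏ i, (a * (1 + ((L y i - p i) / w) ^ 2)⁻¹) ∂μ :=
        setIntegral_le_integral hint (.of_forall fun y => Finset.prod_nonneg fun i _ => by
          positivity)
    _ = _ := by
        rw [integral_prod_comp_eq L (fun i s => a * (1 + ((s - p i) / w) ^ 2)⁻¹) p hr]
        simp only [integral_const_mul, integral_inv_one_add_sq_div hw, Finset.prod_const,
          Finset.card_univ, mul_assoc]

end Integral

/-! ### Peaking polynomials on a convex body -/

section Ridge

variable {ι : Type*} [Finite ι]

lemma exists_totalDegree_le_one_eval_eq (f : (ι → ℝ) →ᴬ[ℝ] ℝ) :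
    ∃ A : MvPolynomial ι ℝ, A.totalDegree ≤ 1 ∧ ∀ y, MvPolynomial.eval y A = f y := by
  classical
  cases nonempty_fintype ι
  refine ⟨∑ i, MvPolynomial.C (f.contLinear (Pi.single i 1)) * MvPolynomial.X i +
    MvPolynomial.C (f 0), ?_, fun y => ?_⟩
  · refine (MvPolynomial.totalDegree_add _ _).trans (max_le ?_ (by simp))
    refine MvPolynomial.totalDegree_finsetSum_le fun i _ => ?_
    exact (MvPolynomial.totalDegree_mul _ _).trans (by simp)
  · have hlinear : f.contLinear y = ∑ i, y i • f.contLinear (Pi.single i 1) := by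
      conv_lhs => rw [pi_eq_sum_univ' y, map_sum]
      simp only [map_smul]
    have hy : f y = f 0 + f.contLinear y := by rw [← apply_add_eq, zero_add]
    simp [hy, hlinear, mul_comm, add_comm]

lemma exists_totalDegree_le_natDegree_eval_eq (p : Polynomial ℝ) (f : (ι → ℝ) →ᴬ[ℝ] ℝ) :
    ∃ P : MvPolynomial ι ℝ, P.totalDegree ≤ p.natDegree ∧
      ∀ y, MvPolynomial.eval y P = p.eval (f y) := by
  obtain ⟨A, hA, hAf⟩ := exists_totalDegree_le_one_eval_eq f
  refine ⟨p.aeval A, ?_, fun y => ?_⟩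
  · rw [Polynomial.aeval_eq_sum_range]
    refine MvPolynomial.totalDegree_finsetSum_le fun j hj => ?_
    calc (p.coeff j • A ^ j).totalDegree ≤ j * A.totalDegree :=
          (MvPolynomial.totalDegree_smul_le _ _).trans (MvPolynomial.totalDegree_pow _ _)
      _ ≤ j * 1 := Nat.mul_le_mul_left j hA
      _ ≤ p.natDegree := by simpa using Nat.lt_succ_iff.mp (Finset.mem_range.mp hj)
  · simp [Polynomial.aeval_eq_sum_range, Polynomial.eval_eq_sum_range, hAf]

end Ridge

section Peak

open MeasureTheory

lemma sq_le_mul_inv_one_add_sq {B u v w : ℝ} (hw : 0 < w) (hu : |u| ≤ B) (huv : |u| * |v| ≤ B * w) :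
    u ^ 2 ≤ 2 * B ^ 2 * (1 + (v / w) ^ 2)⁻¹ := by
  have hB : 0 ≤ B := (abs_nonneg u).trans hu
  have hsq : u ^ 2 ≤ B ^ 2 := sq_le_sq.mpr (hu.trans (le_abs_self B))
  have hmul : (u * (v / w)) ^ 2 ≤ B ^ 2 := by
    refine sq_le_sq.mpr ?_
    rw [abs_mul, abs_div, abs_of_pos hw, abs_of_nonneg hB, ← mul_div_assoc, div_le_iff₀ hw]
    exact huv
  rw [← div_eq_mul_inv, le_div_iff₀ (by positivity)]
  linarith [mul_pow u (v / w) 2]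

variable {ι : Type*} {Ω : Set (ι → ℝ)} {c x : ι → ℝ} {κ σ ρ : ℝ} {n k : ℕ}

lemma exists_peaking_polynomial_comp [Finite ι] {f : (ι → ℝ) →ᴬ[ℝ] ℝ}
    (hf : ∀ y ∈ Ω, f y ∈ Set.Icc 0 1) (hx : x ∈ Ω) {τ : ℝ} (hτ : 0 < τ) (hτx : τ ≤ f x) (hn : 0 < n)
    (hk : n + 2 * Real.pi / √τ ≤ k) :
    ∃ P : MvPolynomial ι ℝ, P.totalDegree ≤ k ∧ MvPolynomial.eval x P = 1 ∧
      ∀ y ∈ Ω, |MvPolynomial.eval y P| ≤ 10 ∧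
        |MvPolynomial.eval y P| * |f y - f x| ≤ 10 * √(f x) / n := by
  obtain ⟨p, hdeg, hpx, hp⟩ := exists_peaking_polynomial hn (hτ.trans_le hτx) (hf x hx).2
  obtain ⟨P, hP, hPe⟩ := exists_totalDegree_le_natDegree_eval_eq p f
  have hpk : (p.natDegree : ℝ) ≤ k := hdeg.trans (hk.trans' (by gcongr))
  refine ⟨P, hP.trans (by exact_mod_cast hpk), by rw [hPe, hpx], fun y hy => ?_⟩
  rw [hPe]
  exact hp _ (hf y hy)

variable [Fintype ι]

lemma exists_peaking_family (hcomp : IsCompact Ω) (hint : (interior Ω).Nonempty)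
    (hc : IsCenter Ω c κ) (hσ : 0 < σ) (hx : x ∈ deepPart Ω c σ) (hn : 0 < n)
    (hk : n + 2 * Real.pi * √κ / σ ≤ k) :
    ∃ (L : (ι → ℝ) ≃L[ℝ] (Fin (Fintype.card ι) → ℝ))
      (P : Fin (Fintype.card ι) → MvPolynomial ι ℝ),
      (∀ i, (P i).totalDegree ≤ k ∧ MvPolynomial.eval x (P i) = 1 ∧
        ∀ y ∈ Ω, |MvPolynomial.eval y (P i)| ≤ 10 ∧
          |MvPolynomial.eval y (P i)| * |L y i - L x i| ≤ 10 * (√κ / n)) ∧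
      ∀ r, 0 ≤ r → L ⁻¹' Metric.closedBall (L x) r ⊆ cell Ω c x (2 * Fintype.card ι * r) := by
  have hframe := exists_frame hcomp hint hc hσ hx
  rw [Module.finrank_fintype_fun_eq_card] at hframe
  obtain ⟨L, f, hf, hball⟩ := hframe
  have hκ : 0 < κ := one_pos.trans_le hc.one_le
  have hfx (i) : σ ^ 2 * κ⁻¹ ≤ f i x := (hf i).2.1 ▸ hx.2 (f i) (hf i).1
  have hfΩ (i) : ∀ y ∈ Ω, f i y ∈ Set.Icc 0 1 := fun y hy =>
    ⟨(hf i).1 y hy, by simpa [(hf i).2.1, hκ.ne'] using hc.apply_le (f i) (hf i).1 y hy⟩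
  have hτ : 0 < σ ^ 2 * κ⁻¹ := by positivity
  have hsqrt : 2 * Real.pi / √(σ ^ 2 * κ⁻¹) = 2 * Real.pi * √κ / σ := by
    rw [Real.sqrt_mul (sq_nonneg σ), Real.sqrt_sq hσ.le, Real.sqrt_inv]
    field_simp
  choose P hdeg hPx hP using fun i =>
    exists_peaking_polynomial_comp (hfΩ i) hx.1 hτ (hfx i) hn (hsqrt ▸ hk)
  refine ⟨L, P, fun i => ⟨hdeg i, hPx i, fun y hy => ⟨(hP i y hy).1, ?_⟩⟩, hball⟩
  have hfx0 : 0 < f i x := hτ.trans_le (hfx i)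
  have hpos : 0 < √(f i x) * (√κ)⁻¹ := by positivity
  have hmul := (hP i y hy).2
  rw [(hf i).2.2 y, Real.sqrt_mul hfx0.le, Real.sqrt_inv, abs_mul, abs_of_pos hpos,
    mul_left_comm] at hmul
  refine le_of_mul_le_mul_left (hmul.trans_eq ?_) hpos
  field_simp

lemma preimage_closedBall_subset_cell {L : (ι → ℝ) ≃L[ℝ] (Fin (Fintype.card ι) → ℝ)}
    (hL : ∀ r, 0 ≤ r → L ⁻¹' Metric.closedBall (L x) r ⊆ cell Ω c x (2 * Fintype.card ι * r))
    (hρ : 0 < ρ) :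
    L ⁻¹' Metric.closedBall (L x) (ρ / (2 * (Fintype.card ι + 1))) ⊆ cell Ω c x ρ := by
  refine (hL _ (by positivity)).trans (cell_mono ?_)
  rw [mul_div_assoc', div_le_iff₀ (by positivity)]
  linarith

lemma measureReal_cell_pos (hcomp : IsCompact Ω) (hconv : Convex ℝ Ω)
    (hint : (interior Ω).Nonempty) (hc : IsCenter Ω c κ) (hρ0 : 0 < ρ) (hρ : 2 * ρ ≤ σ)
    (hx : x ∈ deepPart Ω c σ) : 0 < volume.real (cell Ω c x ρ) := by
  have hσ : 0 < σ := by linarith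
  have hframe := exists_frame hcomp hint hc hσ hx
  rw [Module.finrank_fintype_fun_eq_card] at hframe
  obtain ⟨L, -, -, hball⟩ := hframe
  exact (measureReal_preimage_closedBall_pos L (L x) (by positivity)).trans_le
    (measureReal_mono (preimage_closedBall_subset_cell hball hρ0)
      ((measure_mono (cell_subset hconv hcomp.isClosed hσ.le hρ hx)).trans_lt
        hcomp.measure_lt_top).ne)

lemma exists_localized_polynomial (hcomp : IsCompact Ω) (hconv : Convex ℝ Ω)
    (hint : (interior Ω).Nonempty) (hc : IsCenter Ω c κ) (hρ0 : 0 < ρ) (hρ : 2 * ρ ≤ σ)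
    (hx : x ∈ deepPart Ω c σ) (hn : 0 < n) (hk : n + 2 * Real.pi * √κ / σ ≤ k) :
    ∃ P : MvPolynomial ι ℝ, P.totalDegree ≤ Fintype.card ι * k ∧ MvPolynomial.eval x P = 1 ∧
      (∀ y ∈ Ω, |MvPolynomial.eval y P| ≤ 10 ^ Fintype.card ι) ∧
      ∫ y in Ω, (MvPolynomial.eval y P) ^ 2 ≤
        (200 * Real.pi * √κ * (Fintype.card ι + 1) / (n * ρ)) ^ Fintype.card ι *
          volume.real (cell Ω c x ρ) := by
  have hσ : 0 < σ := by linarith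
  obtain ⟨L, P, hP, hball⟩ := exists_peaking_family hcomp hint hc hσ hx hn hk
  have hw : 0 < √κ / n := by have := one_pos.trans_le hc.one_le; positivity
  have hF : IntegrableOn (fun y => (MvPolynomial.eval y (∏ i, P i)) ^ 2) Ω :=
    ((MvPolynomial.continuous_eval _).pow 2).continuousOn.integrableOn_compact hcomp
  have hle : ∀ y ∈ Ω, (MvPolynomial.eval y (∏ i, P i)) ^ 2 ≤
      ∏ i, (200 * (1 + ((L y i - L x i) / (√κ / n)) ^ 2)⁻¹) := fun y hy => by
    rw [map_prod, ← Finset.prod_pow]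
    refine Finset.prod_le_prod (fun i _ => sq_nonneg _) fun i _ => ?_
    exact (sq_le_mul_inv_one_add_sq hw ((hP i).2.2 y hy).1 ((hP i).2.2 y hy).2).trans_eq
      (by norm_num)
  refine ⟨∏ i, P i, ?_, ?_, fun y hy => ?_, ?_⟩
  · exact (MvPolynomial.totalDegree_finsetProd _ _).trans
      ((Finset.sum_le_sum fun i _ => (hP i).1).trans (by simp))
  · rw [map_prod]
    exact Finset.prod_eq_one fun i _ => (hP i).2.1
  · rw [map_prod, Finset.abs_prod]
    exact (Finset.prod_le_prod (fun _ _ => abs_nonneg _) fun i _ => ((hP i).2.2 y hy).1).trans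
      (by simp)
  · refine (setIntegral_le_of_le_prod hcomp.measurableSet hF L (L x) (by norm_num) hw
      (r := ρ / (2 * (Fintype.card ι + 1))) (by positivity) hle).trans ?_
    rw [Fintype.card_fin]
    refine (mul_le_mul_of_nonneg_left (measureReal_mono
      (preimage_closedBall_subset_cell hball hρ0) ((measure_mono
        (cell_subset hconv hcomp.isClosed hσ.le hρ hx)).trans_lt hcomp.measure_lt_top).ne)
      (by positivity)).trans_eq ?_
    congr 2
    field_simp

end Peak

/-! ### Counting disjoint sets that carry localized polynomials -/

section Count

open MeasureTheory

lemma sum_norm_sq_starProjection_le_finrank {𝕜 H ι : Type*} [RCLike 𝕜] [NormedAddCommGroup H]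
    [InnerProductSpace 𝕜 H] [Fintype ι] {u : ι → H} (hu : Orthonormal 𝕜 u) (W : Submodule 𝕜 H)
    [FiniteDimensional 𝕜 W] :
    ∑ j, ‖W.starProjection (u j)‖ ^ 2 ≤ Module.finrank 𝕜 W := by
  let e := stdOrthonormalBasis 𝕜 W
  have he : Orthonormal 𝕜 fun i => (e i : H) := e.orthonormal.comp_linearIsometry W.subtypeₗᵢ
  have hnorm (j) : ‖W.starProjection (u j)‖ ^ 2 = ∑ i, ‖inner 𝕜 (u j) (e i : H)‖ ^ 2 := by
    rw [W.starProjection_apply, Submodule.norm_coe, ← e.sum_sq_norm_inner_left]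
    simp
  calc ∑ j, ‖W.starProjection (u j)‖ ^ 2
      = ∑ i, ∑ j, ‖inner 𝕜 (u j) (e i : H)‖ ^ 2 := by
        simp only [hnorm]
        exact Finset.sum_comm
    _ ≤ ∑ i, ‖(e i : H)‖ ^ 2 := Finset.sum_le_sum fun i _ => hu.sum_inner_products_le (e i : H)
    _ = Module.finrank 𝕜 W := by simp [he.norm_eq_one]

lemma orthonormal_smul_indicatorConstLp {α ι : Type*} [MeasurableSpace α] {μ : Measure α}
    {D : ι → Set α} (hD : ∀ j, MeasurableSet (D j))
    (hdisj : Pairwise fun j k => Disjoint (D j) (D k))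
    (hpos : ∀ j, 0 < μ.real (D j)) (hfin : ∀ j, μ (D j) ≠ ⊤) :
    Orthonormal ℝ fun j => (√(μ.real (D j)))⁻¹ • indicatorConstLp 2 (hD j) (hfin j) (1 : ℝ) := by
  refine ⟨fun j => ?_, fun j k hjk => ?_⟩
  · have := Real.sqrt_pos.mpr (hpos j)
    rw [norm_smul, norm_indicatorConstLp two_ne_zero ENNReal.ofNat_ne_top, norm_inv, norm_one,
      Real.norm_of_nonneg this.le, ENNReal.toReal_ofNat, ← Real.sqrt_eq_rpow, one_mul,
      inv_mul_cancel₀ this.ne']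
  · beta_reduce
    rw [real_inner_smul_left, real_inner_smul_right,
      L2.real_inner_indicatorConstLp_one_indicatorConstLp_one (hD j) (hD k) (hfin j) (hfin k),
      (hdisj hjk).inter_eq]
    simp

lemma card_le_mul_finrank_of_half_le {α ι : Type*} [MeasurableSpace α] {μ : Measure α} [Fintype ι]
    {D : ι → Set α} (hD : ∀ j, MeasurableSet (D j))
    (hdisj : Pairwise fun j k => Disjoint (D j) (D k))
    (hpos : ∀ j, 0 < μ.real (D j)) (W : Submodule ℝ (Lp ℝ 2 μ)) [FiniteDimensional ℝ W]
    {w : ι → Lp ℝ 2 μ} (hw : ∀ j, w j ∈ W) (hhalf : ∀ j, ∀ᵐ y ∂μ.restrict (D j), 1 / 2 ≤ w j y)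
    {A : ℝ} (hA : 0 ≤ A) (hnorm : ∀ j, ‖w j‖ ^ 2 ≤ A * μ.real (D j)) :
    (Fintype.card ι : ℝ) ≤ 4 * A * Module.finrank ℝ W := by
  have hfin (j) : μ (D j) ≠ ⊤ := fun h => by simpa [measureReal_def, h] using hpos j
  have hu := orthonormal_smul_indicatorConstLp hD hdisj hpos hfin
  set u := fun j => (√(μ.real (D j)))⁻¹ • indicatorConstLp 2 (hD j) (hfin j) (1 : ℝ)
  have hinner (j) : √(μ.real (D j)) / 2 ≤ inner ℝ (u j) (w j) := by
    have hint : μ.real (D j) * (1 / 2) ≤ ∫ y in D j, w j y ∂μ := by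
      rw [← smul_eq_mul, ← setIntegral_const]
      exact setIntegral_mono_on_ae (integrableOn_const (hfin j))
        (integrableOn_Lp_of_measure_ne_top _ fact_one_le_two_ennreal.elim (hfin j)) (hD j)
        ((ae_restrict_iff' (hD j)).mp (hhalf j))
    have hsqrt := Real.sqrt_pos.mpr (hpos j)
    rw [real_inner_smul_left, L2.inner_indicatorConstLp_one, inv_mul_eq_div, le_div_iff₀ hsqrt]
    linarith [Real.mul_self_sqrt (hpos j).le]
  have hone (j) : 1 ≤ 4 * A * ‖W.starProjection (u j)‖ ^ 2 := by
    have hle : √(μ.real (D j)) / 2 ≤ ‖W.starProjection (u j)‖ * ‖w j‖ := by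
      refine (hinner j).trans ((real_inner_le_norm _ _).trans' (le_of_eq ?_))
      rw [W.inner_starProjection_left_eq_right, W.starProjection_eq_self_iff.mpr (hw j)]
    have hsq := pow_le_pow_left₀ (by positivity) hle 2
    rw [div_pow, Real.sq_sqrt (hpos j).le, mul_pow] at hsq
    have := mul_le_mul_of_nonneg_left (hnorm j) (sq_nonneg ‖W.starProjection (u j)‖)
    refine le_of_mul_le_mul_right ?_ (hpos j)
    linarith
  calc (Fintype.card ι : ℝ) = ∑ _j : ι, 1 := by simp
    _ ≤ ∑ j, 4 * A * ‖W.starProjection (u j)‖ ^ 2 := Finset.sum_le_sum fun j _ => hone j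
    _ ≤ 4 * A * Module.finrank ℝ W := by
        rw [← Finset.mul_sum]
        exact mul_le_mul_of_nonneg_left (sum_norm_sq_starProjection_le_finrank hu W) (by positivity)

lemma finrank_restrictTotalDegree_le (ι R : Type*) [Fintype ι] [CommRing R] [Nontrivial R] (m : ℕ) :
    Module.finrank R (MvPolynomial.restrictTotalDegree ι R m) ≤ (m + 1) ^ Fintype.card ι := by
  classical
  rw [MvPolynomial.restrictTotalDegree,
    Module.finrank_eq_nat_card_basis (MvPolynomial.basisRestrictSupport R _)]
  have hle (s : {s : ι →₀ ℕ | s.degree ≤ m}) (i : ι) : s.1 i < m + 1 :=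
    Nat.lt_succ_of_le ((Finsupp.le_degree i s.1).trans s.2)
  refine (Nat.card_le_card_of_injective
    (fun s => fun i => (⟨s.1 i, hle s i⟩ : Fin (m + 1))) fun s t hst => ?_).trans_eq (by simp)
  ext i
  simpa using congrFun hst i

variable {ι : Type*} [Fintype ι] {Ω : Set (ι → ℝ)}

lemma memLp_eval (hΩ : IsCompact Ω) (P : MvPolynomial ι ℝ) :
    MemLp (fun y => MvPolynomial.eval y P) 2 (volume.restrict Ω) :=
  (memLp_two_iff_integrable_sq P.continuous_eval.aestronglyMeasurable).mpr
    ((P.continuous_eval.pow 2).continuousOn.integrableOn_compact hΩ)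

/-- The class in `L²(Ω)` of a polynomial, on a compact set `Ω`. -/
noncomputable def evalLp (hΩ : IsCompact Ω) :
    MvPolynomial ι ℝ →ₗ[ℝ] Lp ℝ 2 (volume.restrict Ω) where
  toFun P := (memLp_eval hΩ P).toLp _
  map_add' P Q := by
    rw [← MemLp.toLp_add]
    congr 1
    ext y
    simp
  map_smul' r P := by
    rw [RingHom.id_apply, ← MemLp.toLp_const_smul]
    congr 1
    ext y
    simp

lemma norm_evalLp_sq (hΩ : IsCompact Ω) (P : MvPolynomial ι ℝ) :
    ‖evalLp hΩ P‖ ^ 2 = ∫ y in Ω, (MvPolynomial.eval y P) ^ 2 := by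
  rw [← real_inner_self_eq_norm_sq, L2.inner_def]
  refine integral_congr_ae ?_
  filter_upwards [(memLp_eval hΩ P).coeFn_toLp] with y hy
  rw [evalLp, LinearMap.coe_mk, AddHom.coe_mk, hy]
  simp [sq]

lemma card_le_of_half_le_eval {κ : Type*} [Fintype κ] (hΩ : IsCompact Ω) {D : κ → Set (ι → ℝ)}
    (hD : ∀ j, MeasurableSet (D j)) (hDΩ : ∀ j, D j ⊆ Ω)
    (hdisj : Pairwise fun j k => Disjoint (D j) (D k)) (hpos : ∀ j, 0 < volume.real (D j)) {m : ℕ}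
    {P : κ → MvPolynomial ι ℝ} (hP : ∀ j, (P j).totalDegree ≤ m)
    (hhalf : ∀ j, ∀ y ∈ D j, 1 / 2 ≤ MvPolynomial.eval y (P j)) {A : ℝ} (hA : 0 ≤ A)
    (hint : ∀ j, ∫ y in Ω, (MvPolynomial.eval y (P j)) ^ 2 ≤ A * volume.real (D j)) :
    (Fintype.card κ : ℝ) ≤ 4 * A * (m + 1) ^ Fintype.card ι := by
  have hvol (j) : (volume.restrict Ω).real (D j) = volume.real (D j) := by
    rw [measureReal_restrict_apply (hD j), Set.inter_eq_left.mpr (hDΩ j)]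
  have hhalfLp (j) : ∀ᵐ y ∂(volume.restrict Ω).restrict (D j), 1 / 2 ≤ evalLp hΩ (P j) y := by
    filter_upwards [ae_restrict_of_ae (memLp_eval hΩ (P j)).coeFn_toLp, ae_restrict_mem (hD j)]
      with y hy hyD
    exact (hhalf j y hyD).trans_eq hy.symm
  have hfinrank := (Submodule.finrank_map_le (evalLp hΩ)
    (MvPolynomial.restrictTotalDegree ι ℝ m)).trans (finrank_restrictTotalDegree_le ι ℝ m)
  refine (card_le_mul_finrank_of_half_le hD hdisj (fun j => (hvol j).symm ▸ hpos j)
    ((MvPolynomial.restrictTotalDegree ι ℝ m).map (evalLp hΩ))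
    (fun j => Submodule.mem_map_of_mem ((MvPolynomial.mem_restrictTotalDegree _ _ _).mpr (hP j)))
    hhalfLp hA fun j => ?_).trans ?_
  · rw [norm_evalLp_sq, hvol]
    exact hint j
  · gcongr
    exact_mod_cast hfinrank

end Count

/-! ### Meshes from maximal packings -/

lemma exists_finset_maximal_packing {α β : Type*} {S : Set α} {B : α → Set β}
    (hB : ∀ x ∈ S, (B x).Nonempty) {N : ℕ}
    (hN : ∀ T : Finset α, ↑T ⊆ S → (T : Set α).PairwiseDisjoint B → T.card ≤ N) :
    ∃ T : Finset α, ↑T ⊆ S ∧ (T : Set α).PairwiseDisjoint B ∧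
      ∀ x ∈ S, ∃ y ∈ T, (B x ∩ B y).Nonempty := by
  obtain ⟨u, huS, hdisj, hcover⟩ := Vitali.exists_disjoint_subfamily_covering_enlargement B S
    (fun _ => 1) 2 one_lt_two (fun _ _ => zero_le_one) 1 (fun _ _ => le_rfl) hB
  have hu : u.Finite := by
    by_contra hinf
    obtain ⟨T, hTu, hT⟩ := Set.Infinite.exists_subset_card_eq hinf (N + 1)
    exact (hN T (hTu.trans huS) (hdisj.subset hTu)).not_gt (by simp [hT])
  refine ⟨hu.toFinset, by simpa using huS, by simpa using hdisj, fun x hx => ?_⟩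
  obtain ⟨y, hy, hxy, -⟩ := hcover x hx
  exact ⟨y, hu.mem_toFinset.mpr hy, hxy⟩

section Mesh

open MeasureTheory

variable {ι : Type*} {Ω : Set (ι → ℝ)} {c : ι → ℝ} {κ σ θ : ℝ} {n k : ℕ}

/-- `T` is a mesh of constant `B` for the polynomials of degree at most `n` on `Ω`: the maximum of
`|Q|` over `Ω` is at most `B` times its maximum over `T`. Attained maxima are avoided by asking for
a point of `T` for each point of `Ω`. -/
def IsPolynomialMesh (n : ℕ) (B : ℝ) (Ω : Set (ι → ℝ)) (T : Finset (ι → ℝ)) : Prop :=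
  ∀ Q : MvPolynomial ι ℝ, Q.totalDegree ≤ n → ∀ z ∈ Ω, ∃ x ∈ T,
    |MvPolynomial.eval z Q| ≤ B * |MvPolynomial.eval x Q|

lemma IsPolynomialMesh.nonempty {B : ℝ} {T : Finset (ι → ℝ)} (hT : IsPolynomialMesh n B Ω T)
    (hΩ : Ω.Nonempty) : T.Nonempty :=
  let ⟨z, hz⟩ := hΩ
  let ⟨x, hx, _⟩ := hT 0 (by simp) z hz
  ⟨x, hx⟩

lemma IsPolynomialMesh.abs_eval_le_mul_iSup {B : ℝ} {T : Finset (ι → ℝ)}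
    (hT : IsPolynomialMesh n B Ω T) (hB : 0 ≤ B) {Q : MvPolynomial ι ℝ} (hQ : Q.totalDegree ≤ n)
    {z : ι → ℝ} (hz : z ∈ Ω) :
    |MvPolynomial.eval z Q| ≤ B * ⨆ x : T, |MvPolynomial.eval x.1 Q| := by
  obtain ⟨x, hx, hle⟩ := hT Q hQ z hz
  exact hle.trans (mul_le_mul_of_nonneg_left (le_ciSup
    (f := fun x : T => |MvPolynomial.eval x.1 Q|) (Set.finite_range _).bddAbove ⟨x, hx⟩) hB)

variable [Fintype ι]

lemma card_le_of_pairwiseDisjoint_cell (hcomp : IsCompact Ω) (hconv : Convex ℝ Ω)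
    (hint : (interior Ω).Nonempty) (hc : IsCenter Ω c κ) (hn : 0 < n)
    (hk : n + 2 * Real.pi * √κ / σ ≤ k) (hθ0 : 0 < θ) (hθ1 : θ ≤ 1) (hθκ : θ ^ 2 * κ ≤ 1)
    (hθσ : θ ≤ σ) (hθk : 14 * (Fintype.card ι * k * θ) * 10 ^ Fintype.card ι ≤ 1)
    {T : Finset (ι → ℝ)} (hT : ↑T ⊆ deepPart Ω c σ)
    (hdisj : (T : Set (ι → ℝ)).PairwiseDisjoint fun x => cell Ω c x (θ / 12)) :
    (T.card : ℝ) ≤ 4 * (2400 * Real.pi * √κ * (Fintype.card ι + 1) / (n * θ)) ^ Fintype.card ι *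
      (Fintype.card ι * k + 1) ^ Fintype.card ι := by
  have hρ0 : 0 < θ / 12 := by positivity
  have hρσ : 2 * (θ / 12) ≤ σ := by linarith
  have hdeep (x : T) : x.1 ∈ deepPart Ω c σ := hT x.2
  choose P hdeg hPx hPle hPint using fun x : T =>
    exists_localized_polynomial hcomp hconv hint hc hρ0 hρσ (hdeep x) hn hk
  have hhalf (x : T) (y) (hy : y ∈ cell Ω c x.1 (θ / 12)) : 1 / 2 ≤ MvPolynomial.eval y (P x) := by
    have hsub := abs_eval_sub_le_of_mem_cell hconv hcomp.isClosed hc hθ0 hθ1 hθκ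
      (deepPart_anti hc.mem hθ0.le hθσ (hdeep x)) (cell_mono (by linarith) hy) (hdeg x) (hPle x)
    push_cast at hsub
    linarith [(abs_le.mp hsub).1, hPx x]
  have hcard := card_le_of_half_le_eval hcomp (fun x : T => isClosed_cell.measurableSet)
    (fun x => cell_subset hconv hcomp.isClosed (hθ0.le.trans hθσ) hρσ (hdeep x))
    (fun x y hxy => hdisj x.2 y.2 (Subtype.coe_injective.ne hxy))
    (fun x => measureReal_cell_pos hcomp hconv hint hc hρ0 hρσ (hdeep x)) hdeg hhalf
    (by positivity) hPint
  rw [Fintype.card_coe] at hcard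
  refine hcard.trans_eq ?_
  push_cast
  congr 3
  field_simp
  ring

lemma isPolynomialMesh_of_cell_inter_nonempty (hcomp : IsCompact Ω) (hconv : Convex ℝ Ω)
    (hc : IsCenter Ω c κ) (hσ1 : σ ≤ 1) (hnσ : 112 * n * σ ≤ 1) (hθ0 : 0 < θ)
    (hθκ : θ ^ 2 * κ ≤ 1) (hθσ : θ ≤ σ) {T : Finset (ι → ℝ)} (hT : ↑T ⊆ deepPart Ω c σ)
    (hcover : ∀ x ∈ deepPart Ω c σ, ∃ y ∈ T,
      (cell Ω c x (θ / 12) ∩ cell Ω c y (θ / 12)).Nonempty) :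
    IsPolynomialMesh n 2 Ω T := by
  intro Q hQ z' hz'
  obtain ⟨z, hz, hmax⟩ :=
    hcomp.exists_isMaxOn ⟨z', hz'⟩ (MvPolynomial.continuous_eval Q).abs.continuousOn
  set M := |MvPolynomial.eval z Q|
  have hσ0 : 0 ≤ σ := hθ0.le.trans hθσ
  have hM0 : 0 ≤ M := abs_nonneg _
  set x := AffineMap.lineMap z c (σ ^ 2)
  have hx : x ∈ deepPart Ω c σ := lineMap_mem_deepPart hconv hc.mem hz hσ0 hσ1
  obtain ⟨w, hw, hxw⟩ := hcover x hx
  have hwx : w ∈ cell Ω c x (θ / 4) := cell_mono (by linarith)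
    (mem_cell_of_cell_inter_nonempty hc.mem hσ0 (by positivity) (by linarith) hx (hT hw) hxw)
  have hzx := abs_eval_lineMap_sub_le hconv hcomp.isClosed hc.mem hz hσ0 hσ1 hQ hmax
  have hxw := abs_eval_sub_le_of_mem_cell hconv hcomp.isClosed hc hθ0 (hθσ.trans hσ1) hθκ
    (deepPart_anti hc.mem hθ0.le hθσ hx) hwx hQ hmax
  have hσM : 28 * n * σ * M ≤ 1 / 4 * M := mul_le_mul_of_nonneg_right (by linarith) hM0
  have hθM : 7 * n * θ * M ≤ 1 / 4 * M := by
    have : n * θ ≤ n * σ := by gcongr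
    exact mul_le_mul_of_nonneg_right (by linarith) hM0
  refine ⟨w, hw, (hmax hz').trans ?_⟩
  have := abs_sub_abs_le_abs_sub (MvPolynomial.eval z Q) (MvPolynomial.eval x Q)
  have := abs_sub_abs_le_abs_sub (MvPolynomial.eval x Q) (MvPolynomial.eval w Q)
  rw [abs_sub_comm] at hzx hxw
  change M ≤ _
  linarith

lemma exists_isPolynomialMesh_of_params (hcomp : IsCompact Ω) (hconv : Convex ℝ Ω)
    (hint : (interior Ω).Nonempty) (hc : IsCenter Ω c κ) (hn : 0 < n)
    (hk : n + 2 * Real.pi * √κ / σ ≤ k) (hσ1 : σ ≤ 1) (hnσ : 112 * n * σ ≤ 1) (hθ0 : 0 < θ)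
    (hθκ : θ ^ 2 * κ ≤ 1) (hθσ : θ ≤ σ)
    (hθk : 14 * (Fintype.card ι * k * θ) * 10 ^ Fintype.card ι ≤ 1) :
    ∃ T : Finset (ι → ℝ), ↑T ⊆ Ω ∧ IsPolynomialMesh n 2 Ω T ∧
      (T.card : ℝ) ≤ 4 * (2400 * Real.pi * √κ * (Fintype.card ι + 1) / (n * θ)) ^ Fintype.card ι *
        (Fintype.card ι * k + 1) ^ Fintype.card ι := by
  have hcard (T : Finset (ι → ℝ)) (hT : ↑T ⊆ deepPart Ω c σ)
      (hdisj : (T : Set (ι → ℝ)).PairwiseDisjoint fun x => cell Ω c x (θ / 12)) :=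
    card_le_of_pairwiseDisjoint_cell hcomp hconv hint hc hn hk hθ0 (hθσ.trans hσ1) hθκ hθσ hθk hT
      hdisj
  obtain ⟨T, hT, hdisj, hcover⟩ := exists_finset_maximal_packing
    (fun x _ => ⟨x, self_mem_cell (by positivity)⟩)
    fun T hT hdisj => Nat.le_floor (hcard T hT hdisj)
  exact ⟨T, hT.trans fun _ hx => hx.1, isPolynomialMesh_of_cell_inter_nonempty hcomp hconv hc hσ1
    hnσ hθ0 hθκ hθσ hT hcover, hcard T hT hdisj⟩

lemma exists_mesh_constants (d : ℕ) : ∃ (K : ℕ) (β : ℝ), 0 < β ∧ 112 * β ≤ 1 ∧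
    β ^ 2 * (d + 1) ≤ 1 ∧ 14 * (d * K * β) * 10 ^ d ≤ 1 ∧ 1 + 224 * Real.pi * √(d + 1) ≤ K := by
  obtain ⟨K, hK⟩ := exists_nat_ge (1 + 224 * Real.pi * √(d + 1))
  have hK1 : (1 : ℝ) ≤ K := hK.trans' (le_add_of_nonneg_right (by positivity))
  have hten : (1 : ℝ) ≤ 10 ^ d := one_le_pow₀ (by norm_num)
  have hd : (1 : ℝ) ≤ d + 1 := by simp
  have hKten : (1 : ℝ) ≤ K * 10 ^ d := one_le_mul_of_one_le_of_one_le hK1 hten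
  set β : ℝ := (112 * ((d + 1) * (K * 10 ^ d)))⁻¹ with hβ
  have hβ0 : 0 < β := by positivity
  have hβe : 112 * β * ((d + 1) * (K * 10 ^ d)) = 1 := by rw [hβ]; field_simp
  have hβd : 112 * β * (d + 1) ≤ 1 := hβe.le.trans' <|
    mul_le_mul_of_nonneg_left (le_mul_of_one_le_right (by positivity) hKten) (by positivity)
  have hβ1 : 112 * β ≤ 1 := hβd.trans' (le_mul_of_one_le_right (by positivity) hd)
  refine ⟨K, β, hβ0, hβ1, ?_, ?_, hK⟩
  · nlinarith
  · have : 0 ≤ β * (K * 10 ^ d) := by positivity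
    have : 0 ≤ β * (K * 10 ^ d) * d := by positivity
    linarith

theorem exists_isPolynomialMesh (ι : Type*) [Fintype ι] :
    ∃ C : ℝ, 0 < C ∧ ∀ n : ℕ, 0 < n → ∀ Ω : Set (ι → ℝ),
      IsCompact Ω → Convex ℝ Ω → (interior Ω).Nonempty →
      ∃ T : Finset (ι → ℝ), ↑T ⊆ Ω ∧ IsPolynomialMesh n 2 Ω T ∧
        (T.card : ℝ) ≤ C * n ^ Fintype.card ι := by
  obtain ⟨K, β, hβ0, hβ1, hβd, hβK, hK⟩ := exists_mesh_constants (Fintype.card ι)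
  refine ⟨4 * (2400 * Real.pi * √(Fintype.card ι + 1) * (Fintype.card ι + 1) / β *
    (Fintype.card ι * K + 1)) ^ Fintype.card ι, by positivity, fun n hn Ω hcomp hconv hint => ?_⟩
  have hn1 : (1 : ℝ) ≤ n := by exact_mod_cast hn
  obtain ⟨c, hc⟩ := exists_isCenter hcomp hconv (hint.mono interior_subset)
  rw [Module.finrank_fintype_fun_eq_card] at hc
  have hk : n + 2 * Real.pi * √(Fintype.card ι + 1) / (1 / (112 * n)) ≤ ((K * n : ℕ) : ℝ) := by
    push_cast
    refine (mul_le_mul_of_nonneg_right hK n.cast_nonneg).trans' (le_of_eq ?_)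
    field_simp
    ring
  have hσ1 : 1 / (112 * n : ℝ) ≤ 1 := (div_le_one (by positivity)).mpr (by linarith)
  have hθκ : (β / n) ^ 2 * (Fintype.card ι + 1) ≤ 1 := by
    refine hβd.trans' ?_
    gcongr
    exact div_le_self hβ0.le hn1
  have hθσ : β / n ≤ 1 / (112 * n) := by
    rw [div_le_div_iff₀ (by positivity) (by positivity)]
    nlinarith
  have hθk : 14 * (Fintype.card ι * (K * n : ℕ) * (β / n)) * 10 ^ Fintype.card ι ≤ 1 := by
    refine hβK.trans' (le_of_eq ?_)
    push_cast
    field_simp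
  obtain ⟨T, hT, hmesh, hcard⟩ := exists_isPolynomialMesh_of_params hcomp hconv hint hc hn hk hσ1
    (by field_simp; rfl) (by positivity) hθκ hθσ hθk
  have hdim : Fintype.card ι * (K * n : ℕ) + 1 ≤ (Fintype.card ι * K + 1) * (n : ℝ) := by
    push_cast
    linarith
  rw [mul_div_cancel₀ β (by positivity)] at hcard
  refine ⟨T, hT, hmesh, hcard.trans ?_⟩
  rw [mul_assoc 4, mul_assoc 4, ← mul_pow, ← mul_pow, mul_assoc (_ / β)]
  gcongr

end Mesh

theorem optimal_polynomial_meshes {d : ℕ} (hd : 1 ≤ d) :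
    ∃ C : ℝ, 0 < C ∧ ∀ n : ℕ, 0 < n → ∀ Ω : Set (EuclideanSpace ℝ (Fin d)),
      IsCompact Ω → Convex ℝ Ω → (interior Ω).Nonempty →
      ∃ (N : ℕ) (x : Fin N → EuclideanSpace ℝ (Fin d)),
        0 < N ∧ (N : ℝ) ≤ C * n ^ d ∧ (∀ j, x j ∈ Ω) ∧
        ∀ Q : MvPolynomial (Fin d) ℝ, Q.totalDegree ≤ n →
          ∀ z ∈ Ω, |MvPolynomial.eval (fun i => z i) Q| ≤
            2 * ⨆ j, |MvPolynomial.eval (fun i => x j i) Q| := by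
  obtain ⟨C, hC, hmesh⟩ := exists_isPolynomialMesh (Fin d)
  refine ⟨C, hC, fun n hn Ω hcomp hconv hint => ?_⟩
  let e := EuclideanSpace.equiv (Fin d) ℝ
  have hint' : (interior (e '' Ω)).Nonempty :=
    e.toHomeomorph.image_interior Ω ▸ hint.image e.toHomeomorph
  obtain ⟨T, hTΩ, hT, hcard⟩ := hmesh n hn (e '' Ω) (hcomp.image e.continuous)
    (hconv.linear_image (e : EuclideanSpace ℝ (Fin d) →ₗ[ℝ] (Fin d → ℝ))) hint'
  refine ⟨T.card, fun j => e.symm (T.equivFin.symm j),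
    (hT.nonempty (hint'.mono interior_subset)).card_pos, by simpa using hcard, fun j => ?_,
    fun Q hQ z hz => ?_⟩
  · obtain ⟨w, hw, hwe⟩ := hTΩ (T.equivFin.symm j).2
    beta_reduce
    rwa [← hwe, e.symm_apply_apply]
  · exact (hT.abs_eval_le_mul_iSup two_pos.le hQ (Set.mem_image_of_mem e hz)).trans_eq
      (congrArg (2 * ·) (T.equivFin.symm.iSup_comp
        (g := fun x : T => |MvPolynomial.eval x.1 Q|)).symm)
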